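/- Let $X \subseteq \mathbb{P}^{n+e}$ be a non-degenerate closed subscheme with homogeneous coordinate ring $R$, reduction number $r$, and Noether normalization $S = k[x_e,\ldots,x_{n+e}] \hookrightarrow R$ with $r_S(R) = r$. Then $\deg(X) = \mu_S(R) = \binom{e+r}{r} - 1$ if and only if $X$ is arithmetically Cohen-Macaulay, $\dim_k (I_X)_r = 1$, and the truncated ideal $(I_X)_{\ge r+1}$ has a linear minimal free resolution. -/

import Mathlib

set_option synthInstance.maxHeartbeats 1000000
set_option maxHeartbeats 2000000

noncomputable section

open MvPolynomial

namespace Paper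

variable (k : Type) [Field k]

/-- The degree-`d` graded component of `S₀/I` as a `k`-subspace. -/
def quotComponent {N : ℕ} (I : Ideal (MvPolynomial (Fin N) k)) (d : ℕ) :
    Submodule k (MvPolynomial (Fin N) k ⧸ I) :=
  (MvPolynomial.homogeneousSubmodule (Fin N) k d).map
    (Ideal.Quotient.mkₐ k I).toLinearMap

/-- Hilbert function of `S₀/I`. -/
def hilbFn {N : ℕ} (I : Ideal (MvPolynomial (Fin N) k)) (d : ℕ) : ℕ :=
  Module.finrank k (quotComponent k I d)

/-- `I` is a homogeneous ideal. -/
def IdealHomog {N : ℕ} (I : Ideal (MvPolynomial (Fin N) k)) : Prop :=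
  ∀ f ∈ I, ∀ d : ℕ, MvPolynomial.homogeneousComponent d f ∈ I

/-- `I` is saturated with respect to the irrelevant maximal ideal. -/
def IsSaturatedIdeal {N : ℕ} (I : Ideal (MvPolynomial (Fin N) k)) : Prop :=
  ∀ f : MvPolynomial (Fin N) k, (∀ i : Fin N, MvPolynomial.X i * f ∈ I) → f ∈ I

/-- The subscheme defined by `I` is non-degenerate: `I` contains no nonzero linear form. -/
def Nondegenerate {N : ℕ} (I : Ideal (MvPolynomial (Fin N) k)) : Prop :=
  ∀ f ∈ I, f.IsHomogeneous 1 → f = 0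

/-- `S₀/I` has Hilbert polynomial of degree `n` and multiplicity (degree) `D`. -/
def HasDeg {N : ℕ} (I : Ideal (MvPolynomial (Fin N) k)) (n D : ℕ) : Prop :=
  ∃ P : Polynomial ℚ, P.natDegree = n ∧ (D : ℚ) = P.leadingCoeff * (n.factorial : ℚ) ∧
    ∀ᶠ d : ℕ in Filter.atTop, (hilbFn k I d : ℚ) = Polynomial.eval (d : ℚ) P

/-- The irrelevant maximal ideal of `S₀/I`. -/
def irrelevantIdeal {N : ℕ} (I : Ideal (MvPolynomial (Fin N) k)) :
    Ideal (MvPolynomial (Fin N) k ⧸ I) :=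
  Ideal.span (Set.range fun i : Fin N => Ideal.Quotient.mk I (MvPolynomial.X i))

/-- `S₀/I` is Cohen-Macaulay of dimension `c`: there is a regular sequence of length `c`
in the irrelevant maximal ideal. -/
def IsCMQuot {N : ℕ} (I : Ideal (MvPolynomial (Fin N) k)) (c : ℕ) : Prop :=
  ∃ rs : List (MvPolynomial (Fin N) k ⧸ I), rs.length = c ∧
    (∀ x ∈ rs, x ∈ irrelevantIdeal k I) ∧
    RingTheory.Sequence.IsRegular (MvPolynomial (Fin N) k ⧸ I) rs

/-- The ideal of `R = S₀/I` generated by the images of `x_e, …, x_{N-1}`. -/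
def tailVarsIdeal {N : ℕ} (e : ℕ) (I : Ideal (MvPolynomial (Fin N) k)) :
    Ideal (MvPolynomial (Fin N) k ⧸ I) :=
  Ideal.span {y | ∃ i : Fin N, e ≤ (i : ℕ) ∧ y = Ideal.Quotient.mk I (MvPolynomial.X i)}

/-- The reduction number `r_S(R)` of the Noether normalization by the last variables:
the least `t > 0` with `R_{t+1} = J_{t+1}` for `J = (x_e, …, x_{N-1})R`. -/
def reductionNumber {N : ℕ} (e : ℕ) (I : Ideal (MvPolynomial (Fin N) k)) : ℕ :=
  sInf {t | 0 < t ∧ quotComponent k I (t + 1) ≤ (tailVarsIdeal k e I).restrictScalars k}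

/-- The reduction number `r(R)`: the minimum of `r_J(R₊)` over all minimal reductions `J`
of `R₊`, i.e. ideals generated by `c = dim R` linear forms. -/
def redNumAll {N : ℕ} (I : Ideal (MvPolynomial (Fin N) k)) (c : ℕ) : ℕ :=
  sInf {t | 0 < t ∧ ∃ L : Finset (MvPolynomial (Fin N) k ⧸ I),
    (L : Set (MvPolynomial (Fin N) k ⧸ I)) ⊆ quotComponent k I 1 ∧ L.card = c ∧
    quotComponent k I (t + 1) ≤
      (Ideal.span (L : Set (MvPolynomial (Fin N) k ⧸ I))).restrictScalars k}

/-- The `k`-algebra map `S = k[x_e, …, x_{N-1}] → R = S₀/I`. -/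
def nnMap {N : ℕ} (e : ℕ) (I : Ideal (MvPolynomial (Fin N) k)) :
    MvPolynomial {i : Fin N // e ≤ (i : ℕ)} k →ₐ[k] (MvPolynomial (Fin N) k ⧸ I) :=
  MvPolynomial.aeval fun i => Ideal.Quotient.mk I (MvPolynomial.X i.1)

/-- `S = k[x_e, …, x_{N-1}] → R = S₀/I` is a Noether normalization. -/
def IsNoetherNormalization {N : ℕ} (e : ℕ) (I : Ideal (MvPolynomial (Fin N) k)) : Prop :=
  Function.Injective (nnMap k e I) ∧ (nnMap k e I).toRingHom.Finite

/-- `μ_S(R) = dim_k R/S₊R`, the minimal number of generators of `R` as an `S`-module. -/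
def muS {N : ℕ} (e : ℕ) (I : Ideal (MvPolynomial (Fin N) k)) : ℕ :=
  Module.finrank k ((MvPolynomial (Fin N) k ⧸ I) ⧸ tailVarsIdeal k e I)

/-- total degree of an exponent vector -/
def tdeg {N : ℕ} (a : Fin N →₀ ℕ) : ℕ := a.sum fun _ n => n

/-- degree reverse lexicographic order with `x_0 > x_1 > ⋯ > x_{N-1}`. -/
def drlLt {N : ℕ} (a b : Fin N →₀ ℕ) : Prop :=
  tdeg a < tdeg b ∨
    (tdeg a = tdeg b ∧ ∃ i : Fin N, b i < a i ∧ ∀ j : Fin N, i < j → a j = b j)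

/-- `m` is the leading (largest, w.r.t. degrevlex) exponent of `p`. -/
def IsLeadExp {N : ℕ} (p : MvPolynomial (Fin N) k) (m : Fin N →₀ ℕ) : Prop :=
  m ∈ p.support ∧ ∀ m' ∈ p.support, m' ≠ m → drlLt m' m

/-- The initial ideal of `I` with respect to the degree reverse lexicographic order. -/
def initialIdeal {N : ℕ} (I : Ideal (MvPolynomial (Fin N) k)) :
    Ideal (MvPolynomial (Fin N) k) :=
  Ideal.span {q | ∃ p ∈ I, ∃ m, IsLeadExp k p m ∧ q = MvPolynomial.monomial m 1}

/-- `p` is homogeneous of degree `d ∈ ℤ` (`0` if `d < 0`). -/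
def HomogOfDeg {σ : Type} (p : MvPolynomial σ k) (d : ℤ) : Prop :=
  p = 0 ∨ ∃ m : ℕ, (m : ℤ) = d ∧ p.IsHomogeneous m

/-- A minimal graded free resolution of the graded module `M` (with grading `Mdeg`) over
`A = k[σ]`, recording the graded Betti numbers `β i j = dim_k Tor_i^A(M,k)_{i+j}`:
the `i`-th free module has `β i j` generators in internal degree `i + j`. -/
structure MinGradedFreeRes (σ : Type) (M : Type) [AddCommGroup M]
    [Module (MvPolynomial σ k) M] [Module k M] (Mdeg : ℤ → Submodule k M) where
  β : ℕ → ℤ → ℕ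
  rowFinite : ∀ i, (Function.support (β i)).Finite
  d : ∀ i : ℕ, (((j : ℤ) × Fin (β (i + 1) j)) →₀ MvPolynomial σ k) →ₗ[MvPolynomial σ k]
      ((j : ℤ) × Fin (β i j)) →₀ MvPolynomial σ k
  ε : (((j : ℤ) × Fin (β 0 j)) →₀ MvPolynomial σ k) →ₗ[MvPolynomial σ k] M
  graded : ∀ (i : ℕ) (j j' : ℤ) (s : Fin (β (i + 1) j)) (s' : Fin (β i j')),
      HomogOfDeg k (d i (Finsupp.single ⟨j, s⟩ 1) ⟨j', s'⟩) (j + 1 - j')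
  minimal : ∀ (i : ℕ) (j j' : ℤ) (s : Fin (β (i + 1) j)) (s' : Fin (β i j')),
      j' = j + 1 → d i (Finsupp.single ⟨j, s⟩ 1) ⟨j', s'⟩ = 0
  eps_graded : ∀ (j : ℤ) (s : Fin (β 0 j)), ε (Finsupp.single ⟨j, s⟩ 1) ∈ Mdeg j
  eps_surj : Function.Surjective ε
  exact0 : Function.Exact (d 0) ε
  exactSeq : ∀ i : ℕ, Function.Exact (d (i + 1)) (d i)

/-- `Mdeg` is a grading of the `k[σ]`-module `M`. -/
def IsGrading (σ : Type) (M : Type) [AddCommGroup M]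
    [Module (MvPolynomial σ k) M] [Module k M] (Mdeg : ℤ → Submodule k M) : Prop :=
  (⨆ d, Mdeg d) = ⊤ ∧ iSupIndep Mdeg ∧
    ∀ (i : σ) (d : ℤ), ∀ x ∈ Mdeg d, (MvPolynomial.X i : MvPolynomial σ k) • x ∈ Mdeg (d + 1)

/-- The standard grading on `S₀/I` (indexed by `ℤ`). -/
def quotDeg {N : ℕ} (I : Ideal (MvPolynomial (Fin N) k)) (d : ℤ) :
    Submodule k (MvPolynomial (Fin N) k ⧸ I) :=
  if 0 ≤ d then quotComponent k I d.toNat else ⊥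

/-- The standard grading on a homogeneous ideal `I ⊆ S₀` (indexed by `ℤ`). -/
def idealDeg {N : ℕ} (I : Ideal (MvPolynomial (Fin N) k)) (d : ℤ) :
    Submodule k ↥I :=
  if 0 ≤ d then
    Submodule.comap ((I.subtype).restrictScalars k)
      (MvPolynomial.homogeneousSubmodule (Fin N) k d.toNat)
  else ⊥

/-- `χ_m = Σ_{j=0}^m (-1)^j β_{m-j,j}`. -/
def chiOf (β : ℕ → ℤ → ℕ) (m : ℤ) : ℤ :=
  if m < 0 then 0
  else ∑ j ∈ Finset.range (m.toNat + 1), (-1 : ℤ) ^ j * (β (m.toNat - j) (j : ℤ) : ℤ)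

/-- projective dimension read off from a minimal resolution's Betti table -/
def pdOf (β : ℕ → ℤ → ℕ) : ℕ∞ :=
  ⨆ i : {i : ℕ // ∃ j, β i j ≠ 0}, ((i : ℕ) : ℕ∞)

/-- index type of the variables `x_t, …, x_{N-1}` -/
def tailIdx (N t : ℕ) := {i : Fin N // t ≤ (i : ℕ)}


/-- The `S = k[x_e,…,x_{N-1}]`-module structure on `R = S₀/I` via `nnMap`. -/
def nnModule {N : ℕ} (e : ℕ) (I : Ideal (MvPolynomial (Fin N) k)) :
    Module (MvPolynomial {i : Fin N // e ≤ (i : ℕ)} k) (MvPolynomial (Fin N) k ⧸ I) :=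
  Module.compHom _ (nnMap k e I).toRingHom

/-- The underlying set of the `S`-submodule of `R = S₀/I` spanned by `s`. -/
def nnSpan {N : ℕ} (e : ℕ) (I : Ideal (MvPolynomial (Fin N) k))
    (s : Set (MvPolynomial (Fin N) k ⧸ I)) : Set (MvPolynomial (Fin N) k ⧸ I) :=
  letI := nnModule k e I
  (Submodule.span (MvPolynomial {i : Fin N // e ≤ (i : ℕ)} k) s : Set _)

/-- The truncated ideal `(I)_{≥ r+1}`, generated by the homogeneous elements of `I`
of degree at least `r + 1`. -/
def truncIdeal {N : ℕ} (I : Ideal (MvPolynomial (Fin N) k)) (r : ℕ) :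
    Ideal (MvPolynomial (Fin N) k) :=
  Ideal.span {f | f ∈ I ∧ ∃ d : ℕ, r + 1 ≤ d ∧ f.IsHomogeneous d}

end Paper

end

section StHelpers
set_option synthInstance.maxHeartbeats 1000000
set_option maxHeartbeats 2000000
open MvPolynomial


namespace St

section graded
variable {k : Type} [Field k] {N : ℕ}
variable {M : Type} [AddCommGroup M] [Module (MvPolynomial (Fin N) k) M]
variable {H : Type} [AddCommGroup H] [Module (MvPolynomial (Fin N) k) H]

/-- graded projections compatible with multiplication by variables -/
structure IsGr (k : Type) [Field k] {N : ℕ} {M : Type} [AddCommGroup M]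
    [Module (MvPolynomial (Fin N) k) M] (p : ℤ → M →+ M) : Prop where
  idem : ∀ d m, p d (p d m) = p d m
  shift : ∀ (i : Fin N) d m, p (d + 1) ((X i : MvPolynomial (Fin N) k) • m)
    = (X i : MvPolynomial (Fin N) k) • p d m

/-- elementary regularity condition along a list of variables -/
def B (p : ℤ → M →+ M) (q : ℤ) (W : Submodule (MvPolynomial (Fin N) k) M) :
    List (Fin N) → Submodule (MvPolynomial (Fin N) k) M → Prop
  | [], Q => ∀ d > q, ∀ m ∈ W, p d m = m → m ∈ Q
  | i :: l, Q => (∀ d > q, ∀ m ∈ W, p d m = m →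
        (X i : MvPolynomial (Fin N) k) • m ∈ Q → m ∈ Q) ∧
      B p q W l (Q ⊔ W.map (LinearMap.lsmul (MvPolynomial (Fin N) k) M (X i)))

lemma mem_step {i : Fin N} {W Q : Submodule (MvPolynomial (Fin N) k) M} {m : M} :
    m ∈ Q ⊔ W.map (LinearMap.lsmul (MvPolynomial (Fin N) k) M (X i)) ↔
      ∃ n ∈ Q, ∃ w ∈ W, m = n + (X i : MvPolynomial (Fin N) k) • w := by
  rw [Submodule.mem_sup]
  constructor
  · rintro ⟨n, hn, y, hy, rfl⟩
    obtain ⟨w, hw, rfl⟩ := Submodule.mem_map.1 hy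
    exact ⟨n, hn, w, hw, rfl⟩
  · rintro ⟨n, hn, w, hw, rfl⟩
    exact ⟨n, hn, _, Submodule.mem_map_of_mem hw, rfl⟩

lemma p_step {p : ℤ → M →+ M} (hp : IsGr k (N := N) p) {d : ℤ} {i : Fin N} {m n w : M}
    (hm : p d m = m) (h : m = n + (X i : MvPolynomial (Fin N) k) • w) :
    m = p d n + (X i : MvPolynomial (Fin N) k) • p (d - 1) w := by
  have := hp.shift i (d - 1) w
  rw [sub_add_cancel] at this
  rw [← this, ← map_add, ← h, hm]

lemma hom_step {p : ℤ → M →+ M} (hp : IsGr k (N := N) p) {i : Fin N}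
    {W Q : Submodule (MvPolynomial (Fin N) k) M}
    (hW : ∀ d, ∀ m ∈ W, p d m ∈ W) (hQ : ∀ d, ∀ m ∈ Q, p d m ∈ Q) :
    ∀ d, ∀ m ∈ Q ⊔ W.map (LinearMap.lsmul (MvPolynomial (Fin N) k) M (X i)),
      p d m ∈ Q ⊔ W.map (LinearMap.lsmul (MvPolynomial (Fin N) k) M (X i)) := by
  intro d m hm
  obtain ⟨n, hn, w, hw, rfl⟩ := mem_step.1 hm
  have := hp.shift i (d - 1) w
  rw [sub_add_cancel] at this
  rw [map_add, this]
  exact mem_step.2 ⟨_, hQ d n hn, _, hW _ w hw, rfl⟩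

/-- the kernel of a graded map inherits regularity, shifted by one -/
lemma B_ker {p : ℤ → M →+ M} (hp : IsGr k (N := N) p) {p' : ℤ → H →+ H}
    (q : ℤ) (f : M →ₗ[MvPolynomial (Fin N) k] H) (hf : ∀ d m, f (p d m) = p' d (f m))
    (W : Submodule (MvPolynomial (Fin N) k) M) (V : Submodule (MvPolynomial (Fin N) k) H)
    (hWh : ∀ d, ∀ m ∈ W, p d m ∈ W)
    (hV : ∀ m, f m ∈ V) (hVs : ∀ v ∈ V, ∃ m, f m = v) :
    ∀ (l : List (Fin N)) (QW QM : Submodule (MvPolynomial (Fin N) k) M)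
      (QV : Submodule (MvPolynomial (Fin N) k) H),
      (∀ d, ∀ m ∈ QM, p d m ∈ QM) →
      QW ≤ QM → (∀ m ∈ QM, f m ∈ QV) → (∀ m ∈ W, f m ∈ QV) →
      (∀ g, f g ∈ QV → ∃ w ∈ W, g - w ∈ QM) →
      (∀ d > q + 1, ∀ w ∈ W, p d w = w → w ∈ QM → w ∈ QW) →
      B p (q + 1) ⊤ l QM → B p' q V l QV → B p (q + 1) W l QW := by
  intro l
  induction l with
  | nil =>
    intro QW QM QV _ _ _ _ _ hL hM _ d hd w hw hpw
    exact hL d hd w hw hpw (hM d hd w trivial hpw)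
  | cons i l ih =>
    intro QW QM QV hQM hle hfQ hfW hex hL hM hVV
    refine ⟨fun d hd w hw hpw h => hL d hd w hw hpw (hM.1 d hd w trivial hpw (hle h)), ?_⟩
    refine ih _ _ _ (hom_step (W := ⊤) hp (fun _ _ _ => Submodule.mem_top) hQM)
      (sup_le_sup hle (Submodule.map_mono le_top)) ?_ ?_ ?_ ?_ hM.2 hVV.2
    · intro m hm
      obtain ⟨n, hn, w, hw, rfl⟩ := mem_step.1 hm
      rw [map_add, map_smul]
      exact mem_step.2 ⟨_, hfQ n hn, _, hV w, rfl⟩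
    · intro m hm
      exact Submodule.mem_sup_left (hfW m hm)
    · intro g hg
      obtain ⟨n, hn, v, hv, h⟩ := mem_step.1 hg
      obtain ⟨g', rfl⟩ := hVs v hv
      obtain ⟨w, hw, hw'⟩ := hex (g - (X i : MvPolynomial (Fin N) k) • g')
        (by rw [map_sub, map_smul, h]; simpa using hn)
      exact ⟨w, hw, mem_step.2 ⟨_, hw', g', trivial, by abel⟩⟩
    · intro d hd w hw hpw h
      obtain ⟨n, hn, g, _, h⟩ := mem_step.1 h
      have h2 := p_step hp hpw h
      set n' := p d n with hn'
      set g' := p (d - 1) g with hg'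
      have hn'Q : n' ∈ QM := hQM d n hn
      have hpg : p (d - 1) g' = g' := hp.idem _ _
      have h3 : f g' ∈ QV := by
        refine hVV.1 (d - 1) (by linarith) _ (hV g') (by rw [← hf, hpg]) ?_
        have : (X i : MvPolynomial (Fin N) k) • f g' = f w - f n' := by
          rw [h2, map_add, map_smul]; abel
        rw [this]
        exact QV.sub_mem (hfW w hw) (hfQ _ hn'Q)
      obtain ⟨w', hw', hgw⟩ := hex g' h3
      have h4 : g' - p (d - 1) w' ∈ QM := by
        have := hQM (d - 1) _ hgw
        rwa [map_sub, hpg] at this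
      refine mem_step.2 ⟨w - (X i : MvPolynomial (Fin N) k) • p (d - 1) w', ?_, p (d - 1) w',
        hWh _ _ hw', by abel⟩
      refine hL d hd _ (W.sub_mem hw (W.smul_mem _ (hWh _ _ hw'))) ?_ ?_
      · have := hp.shift i (d - 1) (p (d - 1) w')
        rw [sub_add_cancel, hp.idem] at this
        rw [map_sub, hpw, this]
      · have : w - (X i : MvPolynomial (Fin N) k) • p (d - 1) w' =
            n' + (X i : MvPolynomial (Fin N) k) • (g' - p (d - 1) w') := by
          rw [smul_sub]; nth_rewrite 1 [h2]; abel
        rw [this]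
        exact QM.add_mem hn'Q (QM.smul_mem _ h4)

/-- truncation inherits regularity -/
lemma B_trunc {p : ℤ → M →+ M} (hp : IsGr k (N := N) p) (q : ℤ)
    (W V : Submodule (MvPolynomial (Fin N) k) M) (hWV : W ≤ V)
    (hVh : ∀ d, ∀ m ∈ V, p d m ∈ V)
    (hiso : ∀ d ≥ q, ∀ m ∈ V, p d m = m → m ∈ W) :
    ∀ (l : List (Fin N)) (QW QV : Submodule (MvPolynomial (Fin N) k) M),
      (∀ d, ∀ m ∈ QV, p d m ∈ QV) → QW ≤ QV →
      (∀ d > q, ∀ w ∈ W, p d w = w → w ∈ QV → w ∈ QW) →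
      B p q V l QV → B p q W l QW := by
  intro l
  induction l with
  | nil =>
    intro QW QV _ _ hL hV d hd w hw hpw
    exact hL d hd w hw hpw (hV d hd w (hWV hw) hpw)
  | cons i l ih =>
    intro QW QV hQ hle hL hV
    refine ⟨fun d hd w hw hpw h => hL d hd w hw hpw (hV.1 d hd w (hWV hw) hpw (hle h)), ?_⟩
    refine ih _ _ (hom_step hp hVh hQ) (sup_le_sup hle (Submodule.map_mono hWV)) ?_ hV.2
    intro d hd w hw hpw h
    obtain ⟨n, hn, v, hv, h⟩ := mem_step.1 h
    have h2 := p_step hp hpw h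
    have hvW : p (d - 1) v ∈ W := hiso (d - 1) (by linarith [Int.add_one_le_iff.2 hd]) _ (hVh _ _ hv) (hp.idem _ _)
    refine mem_step.2 ⟨p d n, hL d hd _ ?_ (hp.idem _ _) (hQ _ _ hn), _, hvW, h2⟩
    have : p d n = w - (X i : MvPolynomial (Fin N) k) • p (d - 1) v := by
      nth_rewrite 1 [h2]; abel
    rw [this]
    exact W.sub_mem hw (W.smul_mem _ hvW)

lemma B_of_all {p : ℤ → M →+ M} (q : ℤ) (W : Submodule (MvPolynomial (Fin N) k) M) :
    ∀ (l : List (Fin N)) (Q : Submodule (MvPolynomial (Fin N) k) M),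
      (∀ d > q, ∀ m ∈ W, p d m = m → m ∈ Q) → B p q W l Q := by
  intro l
  induction l with
  | nil => intro Q h; exact h
  | cons i l ih =>
    intro Q h
    exact ⟨fun d hd m hm hp _ => h d hd m hm hp,
      ih _ fun d hd m hm hp => Submodule.mem_sup_left (h d hd m hm hp)⟩

lemma B_final {p : ℤ → M →+ M} (q : ℤ) (W : Submodule (MvPolynomial (Fin N) k) M) :
    ∀ (l : List (Fin N)) (Q : Submodule (MvPolynomial (Fin N) k) M),
      B p q W l Q → Q ≤ (Ideal.span (Set.range X) : Ideal (MvPolynomial (Fin N) k)) • W →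
      ∀ d > q, ∀ m ∈ W, p d m = m →
        m ∈ (Ideal.span (Set.range X) : Ideal (MvPolynomial (Fin N) k)) • W := by
  intro l
  induction l with
  | nil => intro Q h hQ d hd m hm hp; exact hQ (h d hd m hm hp)
  | cons i l ih =>
    intro Q h hQ
    refine ih _ h.2 (sup_le hQ ?_)
    rintro _ ⟨w, hw, rfl⟩
    exact Submodule.smul_mem_smul (Ideal.subset_span ⟨i, rfl⟩) hw

end graded
end St

namespace St
section res
variable {k : Type} [Field k] {N : ℕ}

/-- integer-indexed homogeneous component -/
noncomputable def hc (k : Type) [Field k] (N : ℕ) (d : ℤ) :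
    MvPolynomial (Fin N) k →+ MvPolynomial (Fin N) k :=
  if 0 ≤ d then (homogeneousComponent d.toNat).toAddMonoidHom else 0

lemma hc_coeff (d : ℤ) (f : MvPolynomial (Fin N) k) (m : Fin N →₀ ℕ) :
    (hc k N d f).coeff m = if (m.degree : ℤ) = d then f.coeff m else 0 := by
  unfold hc
  split_ifs with h1 h2 h2
  · simp only [LinearMap.toAddMonoidHom_coe, coeff_homogeneousComponent]
    rw [if_pos]; omega
  · simp only [LinearMap.toAddMonoidHom_coe, coeff_homogeneousComponent]
    rw [if_neg]; omega
  · omega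
  · simp

lemma hc_nat (d : ℕ) (f : MvPolynomial (Fin N) k) : hc k N (d : ℤ) f = homogeneousComponent d f := by
  simp [hc]

lemma hc_mul {g : MvPolynomial (Fin N) k} {c : ℤ} (hg : Paper.HomogOfDeg k g c) (d : ℤ)
    (f : MvPolynomial (Fin N) k) : hc k N d (f * g) = hc k N (d - c) f * g := by
  classical
  rcases hg with rfl | ⟨a, rfl, hg⟩
  · simp
  ext m
  rw [hc_coeff, coeff_mul, coeff_mul]
  have key : ∀ x ∈ Finset.HasAntidiagonal.antidiagonal m, coeff x.1 (hc k N (d - a) f) * coeff x.2 g =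
      if (m.degree : ℤ) = d then coeff x.1 f * coeff x.2 g else 0 := by
    intro x hx
    rw [Finset.HasAntidiagonal.mem_antidiagonal] at hx
    by_cases h0 : coeff x.2 g = 0
    · simp [h0]
    have h1 : x.2.degree = a := by
      by_contra h; exact h0 (hg.coeff_eq_zero h)
    have h2 : m.degree = x.1.degree + x.2.degree := by rw [← hx, map_add]
    rw [hc_coeff]
    by_cases h : (m.degree : ℤ) = d
    · rw [if_pos h, if_pos]; omega
    · rw [if_neg h, if_neg, zero_mul]; omega
  rw [Finset.sum_congr rfl key]
  split_ifs <;> simp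

lemma homog_X (i : Fin N) : Paper.HomogOfDeg k (X i : MvPolynomial (Fin N) k) 1 :=
  Or.inr ⟨1, by simp, isHomogeneous_X _ _⟩

lemma hc_idem (d : ℤ) (f : MvPolynomial (Fin N) k) : hc k N d (hc k N d f) = hc k N d f := by
  ext m; simp only [hc_coeff]; split_ifs <;> rfl

lemma hc_self {f : MvPolynomial (Fin N) k} {c : ℤ} (hf : Paper.HomogOfDeg k f c) :
    hc k N c f = f := by
  rcases hf with rfl | ⟨a, rfl, hg⟩
  · simp
  · rw [hc_nat, homogeneousComponent_eq_self hg]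

lemma homog_of_hc {f : MvPolynomial (Fin N) k} {c : ℤ} (hf : hc k N c f = f) :
    Paper.HomogOfDeg k f c := by
  by_cases h : 0 ≤ c
  · lift c to ℕ using h
    rw [hc_nat] at hf
    exact Or.inr ⟨c, rfl, hf ▸ homogeneousComponent_isHomogeneous _ _⟩
  · left; rw [← hf, hc, if_neg h]; rfl

lemma gr_poly : IsGr k (N := N) (hc k N) := by
  refine ⟨hc_idem, fun i d m => ?_⟩
  rw [smul_eq_mul, smul_eq_mul, mul_comm, hc_mul (homog_X i), add_sub_cancel_right, mul_comm]

lemma X_mul_mem {t : Set (Fin N)} {i : Fin N} (hi : i ∉ t) {f : MvPolynomial (Fin N) k}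
    (h : X i * f ∈ Ideal.span (X '' t)) : f ∈ Ideal.span (X '' t) := by
  classical
  rw [mem_ideal_span_X_image] at h ⊢
  intro m hm
  obtain ⟨j, hj, hne⟩ := h (Finsupp.single i 1 + m) (by
    rw [mem_support_iff, coeff_X_mul]; exact mem_support_iff.1 hm)
  refine ⟨j, hj, ?_⟩
  have : i ≠ j := fun h => hi (h ▸ hj)
  simpa [Finsupp.single_apply, this] using hne

lemma mem_max_of_pos {f : MvPolynomial (Fin N) k} {d : ℤ} (hd : d ≠ 0)
    (hf : Paper.HomogOfDeg k f d) : f ∈ Ideal.span (X '' (Set.univ : Set (Fin N))) := by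
  rw [mem_ideal_span_X_image]
  intro m hm
  rcases hf with rfl | ⟨a, ha, hf⟩
  · simp at hm
  by_contra! h
  have : m = 0 := by ext j; simpa using h j
  subst this
  have := hf.degree_eq_sum_deg_support hm
  simp at this
  omega

lemma one_notMem_max : (1 : MvPolynomial (Fin N) k) ∉ Ideal.span (X '' (Set.univ : Set (Fin N))) := by
  classical
  rw [mem_ideal_span_X_image]
  intro h
  obtain ⟨i, -, h⟩ := h 0 (by rw [mem_support_iff]; simp)
  simp at h

variable {ι : Type}

/-- graded projections of a free module with generators in degrees `a` -/
noncomputable def pF (k : Type) [Field k] {N : ℕ} {ι : Type} (a : ι → ℤ) (d : ℤ) :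
    (ι →₀ MvPolynomial (Fin N) k) →+ (ι →₀ MvPolynomial (Fin N) k) :=
  Finsupp.liftAddHom fun s => (Finsupp.singleAddHom s).comp (hc k N (d - a s))

lemma pF_single (a : ι → ℤ) (d : ℤ) (s : ι) (c : MvPolynomial (Fin N) k) :
    pF k a d (Finsupp.single s c) = Finsupp.single s (hc k N (d - a s) c) := by
  simp [pF]

lemma pF_apply (a : ι → ℤ) (d : ℤ) (f : ι →₀ MvPolynomial (Fin N) k) (s : ι) :
    pF k a d f s = hc k N (d - a s) (f s) := by
  classical
  induction f using Finsupp.induction_linear with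
  | zero => simp
  | add f g hf hg => simp [hf, hg]
  | single t c =>
    rw [pF_single]
    by_cases h : t = s
    · subst h; simp
    · simp [Finsupp.single_apply, h]

lemma gr_free (a : ι → ℤ) : IsGr k (N := N) (pF k (N := N) a) := by
  refine ⟨fun d m => ?_, fun i d m => ?_⟩
  · ext1 s; simp [pF_apply, hc_idem]
  · ext1 s
    rw [pF_apply, Finsupp.smul_apply, Finsupp.smul_apply, pF_apply, ← gr_poly.shift]
    congr 1; ring_nf

lemma mem_smul_top_iff (K : Ideal (MvPolynomial (Fin N) k)) (f : ι →₀ MvPolynomial (Fin N) k) :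
    f ∈ K • (⊤ : Submodule (MvPolynomial (Fin N) k) (ι →₀ MvPolynomial (Fin N) k)) ↔
      ∀ s, f s ∈ K := by
  constructor
  · intro h s
    induction h using Submodule.smul_induction_on' with
    | smul r hr n _ => exact K.mul_mem_right _ hr
    | add x _ y _ hx hy => exact K.add_mem hx hy
  · intro h
    rw [← Finsupp.sum_single f]
    refine Submodule.sum_mem _ fun s _ => ?_
    have : (Finsupp.single s (f s) : ι →₀ MvPolynomial (Fin N) k) = f s • Finsupp.single s 1 := by
      simp
    rw [this]
    exact Submodule.smul_mem_smul (h s) trivial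

lemma span_insert_smul {M : Type} [AddCommGroup M] [Module (MvPolynomial (Fin N) k) M]
    (t : Set (Fin N)) (i : Fin N) :
    (Ideal.span (X '' t) : Ideal (MvPolynomial (Fin N) k)) • (⊤ : Submodule (MvPolynomial (Fin N) k) M)
      ⊔ (⊤ : Submodule (MvPolynomial (Fin N) k) M).map
        (LinearMap.lsmul (MvPolynomial (Fin N) k) M (X i)) =
    (Ideal.span (X '' (insert i t)) : Ideal (MvPolynomial (Fin N) k)) • ⊤ := by
  rw [Set.image_insert_eq, Ideal.span_insert, sup_comm, Submodule.sup_smul]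
  congr 1
  rw [Submodule.ideal_span_singleton_smul]
  rfl

lemma B_free (a : ι → ℤ) (q : ℤ) (ha : ∀ s, a s ≤ q) :
    ∀ (l : List (Fin N)) (t : Set (Fin N)), l.Nodup → (∀ i ∈ l, i ∉ t) → (∀ i, i ∈ t ∨ i ∈ l) →
      B (k := k) (N := N) (pF k (N := N) a) q (⊤ : Submodule (MvPolynomial (Fin N) k) (ι →₀ MvPolynomial (Fin N) k)) l
        ((Ideal.span (X '' t) : Ideal (MvPolynomial (Fin N) k)) • (⊤ : Submodule (MvPolynomial (Fin N) k) (ι →₀ MvPolynomial (Fin N) k))) := by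
  intro l
  induction l with
  | nil =>
    intro t _ _ h d hd m _ hm
    have ht : t = Set.univ := by ext i; simpa using h i
    rw [mem_smul_top_iff, ht]
    intro s
    refine mem_max_of_pos (d := d - a s) (by have := ha s; omega) (homog_of_hc ?_)
    rw [← pF_apply, hm]
  | cons i l ih =>
    intro t hnd hdis hall
    rw [List.nodup_cons] at hnd
    constructor
    · intro d hd m _ _ hX
      rw [mem_smul_top_iff] at hX ⊢
      intro s
      exact X_mul_mem (hdis i (by simp)) (hX s)
    · rw [span_insert_smul]
      refine ih _ hnd.2 ?_ ?_
      · intro j hj hjt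
        rcases hjt with rfl | hjt
        · exact hnd.1 hj
        · exact hdis j (by simp [hj]) hjt
      · intro j
        have := hall j
        simp only [List.mem_cons, Set.mem_insert_iff] at *
        tauto

lemma B_poly (q : ℤ) (hq : 0 ≤ q) (l : List (Fin N)) :
    ∀ (t : Set (Fin N)), l.Nodup → (∀ i ∈ l, i ∉ t) → (∀ i, i ∈ t ∨ i ∈ l) →
      B (k := k) (N := N) (hc k N) q (⊤ : Submodule (MvPolynomial (Fin N) k) (MvPolynomial (Fin N) k)) l
        ((Ideal.span (X '' t) : Ideal (MvPolynomial (Fin N) k)) • (⊤ : Submodule (MvPolynomial (Fin N) k) (MvPolynomial (Fin N) k))) := by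
  induction l with
  | nil =>
    intro t _ _ h d hd m _ hm
    have ht : t = Set.univ := by ext i; simpa using h i
    rw [smul_eq_mul, Ideal.mul_top, ht]
    exact mem_max_of_pos (d := d) (by omega) (homog_of_hc hm)
  | cons i l ih =>
    intro t hnd hdis hall
    rw [List.nodup_cons] at hnd
    constructor
    · intro d hd m _ _ hX
      rw [smul_eq_mul, Ideal.mul_top] at hX ⊢
      exact X_mul_mem (hdis i (by simp)) hX
    · rw [span_insert_smul]
      refine ih _ hnd.2 ?_ ?_
      · intro j hj hjt
        rcases hjt with rfl | hjt
        · exact hnd.1 hj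
        · exact hdis j (by simp [hj]) hjt
      · intro j
        have := hall j
        simp only [List.mem_cons, Set.mem_insert_iff] at *
        tauto

lemma free_comm {κ : Type} (a : ι → ℤ) (b : κ → ℤ)
    (f : (ι →₀ MvPolynomial (Fin N) k) →ₗ[MvPolynomial (Fin N) k] (κ →₀ MvPolynomial (Fin N) k))
    (hf : ∀ s s', Paper.HomogOfDeg k (f (Finsupp.single s 1) s') (a s - b s')) (d : ℤ) (m) :
    f (pF k a d m) = pF k b d (f m) := by
  induction m using Finsupp.induction_linear with
  | zero => simp
  | add x y hx hy => simp [hx, hy]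
  | single s c =>
    have e : ∀ c : MvPolynomial (Fin N) k, f (Finsupp.single s c) = c • f (Finsupp.single s 1) := by
      intro c; rw [← map_smul]; simp
    rw [pF_single, e, e c]
    ext1 s'
    rw [pF_apply, Finsupp.smul_apply, Finsupp.smul_apply, smul_eq_mul, smul_eq_mul,
      hc_mul (hf s s')]
    congr 2; ring_nf

lemma free_comm' (a : ι → ℤ)
    (f : (ι →₀ MvPolynomial (Fin N) k) →ₗ[MvPolynomial (Fin N) k] MvPolynomial (Fin N) k)
    (hf : ∀ s, Paper.HomogOfDeg k (f (Finsupp.single s 1)) (a s)) (d : ℤ) (m) :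
    f (pF k a d m) = hc k N d (f m) := by
  induction m using Finsupp.induction_linear with
  | zero => simp
  | add x y hx hy => simp [hx, hy]
  | single s c =>
    have e : ∀ c : MvPolynomial (Fin N) k, f (Finsupp.single s c) = c • f (Finsupp.single s 1) := by
      intro c; rw [← map_smul]; simp
    rw [pF_single, e, e c, smul_eq_mul, smul_eq_mul, hc_mul (hf s)]

lemma step {H : Type} [AddCommGroup H] [Module (MvPolynomial (Fin N) k) H] {p' : ℤ → H →+ H}
    (a : ι → ℤ) (q : ℤ) (f : (ι →₀ MvPolynomial (Fin N) k) →ₗ[MvPolynomial (Fin N) k] H)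
    (hf : ∀ d m, f (pF k a d m) = p' d (f m))
    (hker : ∀ m, f m = 0 → ∀ s, m s ∈ Ideal.span (X '' (Set.univ : Set (Fin N))))
    (l : List (Fin N)) (hl : l.Nodup) (hall : ∀ i, i ∈ l)
    (hB : B p' q (LinearMap.range f) l ⊥) :
    (∀ s, a s ≤ q) ∧ B (pF k a) (q + 1) (LinearMap.ker f) l ⊥ := by
  have h1 : ∀ s, a s ≤ q := by
    intro s
    by_contra! h
    have h2 := B_final q _ l ⊥ hB bot_le (a s) h (f (Finsupp.single s 1)) ⟨_, rfl⟩ (by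
      rw [← hf, pF_single, sub_self]
      congr 2
      exact hc_self (Or.inr ⟨0, rfl, isHomogeneous_one _ _⟩))
    rw [LinearMap.range_eq_map, ← Submodule.map_smul''] at h2
    obtain ⟨m, hm, hm'⟩ := h2
    have h3 := hker (Finsupp.single s 1 - m) (by rw [map_sub, hm', sub_self]) s
    have h4 := (mem_smul_top_iff _ _).1 hm s
    rw [← Set.image_univ] at h4
    have := Ideal.add_mem _ h3 h4
    simp at this
    exact one_notMem_max (by simpa using this)
  refine ⟨h1, ?_⟩
  refine B_ker (gr_free a) q f hf (LinearMap.ker f) (LinearMap.range f) ?_ (fun m => ⟨m, rfl⟩)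
    (fun v hv => hv) l ⊥ ⊥ ⊥ ?_ le_rfl ?_ (fun m hm => hm) ?_ (fun _ _ _ _ _ h => h) ?_ hB
  · intro d m hm
    rw [LinearMap.mem_ker] at hm ⊢
    rw [hf, hm, map_zero]
  · intro d m hm
    rw [Submodule.mem_bot] at hm ⊢
    rw [hm, map_zero]
  · intro m hm
    rw [Submodule.mem_bot] at hm ⊢
    rw [hm, map_zero]
  · intro g hg
    exact ⟨g, hg, by simp⟩
  · have := B_free (k := k) a (q + 1) (fun s => (h1 s).trans (by omega)) l ∅ hl (by simp) (by simpa using hall)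
    simpa using this

theorem linear_res (T : Ideal (MvPolynomial (Fin N) k)) (r : ℕ)
    (l : List (Fin N)) (hl : l.Nodup) (hall : ∀ i, i ∈ l)
    (hB : B (hc k N) (r + 1) T l ⊥)
    (hlow : ∀ f ∈ T, ∀ d : ℕ, f.IsHomogeneous d → d < r + 1 → f = 0)
    (res : Paper.MinGradedFreeRes k (Fin N) ↥T (Paper.idealDeg k T)) :
    ∀ (i : ℕ) (j : ℤ), res.β i j ≠ 0 → j = r + 1 := by
  let a : ∀ i : ℕ, ((j : ℤ) × Fin (res.β i j)) → ℤ := fun i s => i + s.1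
  have hεh : ∀ s, Paper.HomogOfDeg k ((T.subtype ∘ₗ res.ε) (Finsupp.single s 1)) (a 0 s) := by
    rintro ⟨j, s⟩
    have := res.eps_graded j s
    unfold Paper.idealDeg at this
    split_ifs at this with h
    · right
      refine ⟨j.toNat, by simp [a, h], ?_⟩
      simpa using this
    · left
      rw [Submodule.mem_bot] at this
      simp [this]
  have hdh : ∀ i s s', Paper.HomogOfDeg k (res.d i (Finsupp.single s 1) s') (a (i + 1) s - a i s') := by
    rintro i ⟨j, s⟩ ⟨j', s'⟩
    have := res.graded i j j' s s'
    convert this using 1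
    simp [a]; ring
  have hdm : ∀ i m s', res.d i m s' ∈ Ideal.span (X '' (Set.univ : Set (Fin N))) := by
    intro i m s'
    induction m using Finsupp.induction_linear with
    | zero => simp
    | add x y hx hy => rw [map_add]; exact Ideal.add_mem _ hx hy
    | single s c =>
      have e : res.d i (Finsupp.single s c) = c • res.d i (Finsupp.single s 1) := by
        rw [← map_smul]; simp
      rw [e, Finsupp.smul_apply]
      refine Ideal.mul_mem_left _ _ ?_
      obtain ⟨j, s⟩ := s
      obtain ⟨j', s'⟩ := s'
      by_cases h : j' = j + 1
      · rw [res.minimal i j j' s s' h]; exact Ideal.zero_mem _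
      · exact mem_max_of_pos (d := j + 1 - j') (by omega) (res.graded i j j' s s')
  have hker0 : ∀ m, (T.subtype ∘ₗ res.ε) m = 0 → ∀ s, m s ∈ Ideal.span (X '' (Set.univ : Set (Fin N))) := by
    intro m hm s
    obtain ⟨m', rfl⟩ := (res.exact0 m).1 (by simpa using hm)
    exact hdm 0 m' s
  have hkeri : ∀ i m, res.d i m = 0 → ∀ s, m s ∈ Ideal.span (X '' (Set.univ : Set (Fin N))) := by
    intro i m hm s
    obtain ⟨m', rfl⟩ := (res.exactSeq i m).1 hm
    exact hdm (i + 1) m' s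
  have hrange0 : LinearMap.range (T.subtype ∘ₗ res.ε) = T := by
    rw [LinearMap.range_comp, LinearMap.range_eq_top.2 res.eps_surj]
    simp
  have hup : ∀ i : ℕ, (∀ s, a i s ≤ r + 1 + i) ∧
      B (pF k (a i)) (r + 1 + i + 1) (LinearMap.range (res.d i)) l ⊥ := by
    intro i
    induction i with
    | zero =>
      have := step (a 0) (r + 1) (T.subtype ∘ₗ res.ε) (free_comm' _ _ hεh) hker0 l hl hall
        (by rw [hrange0]; exact hB)
      have hk : LinearMap.ker (T.subtype ∘ₗ res.ε) = LinearMap.range (res.d 0) := by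
        ext m
        rw [LinearMap.mem_ker, LinearMap.mem_range]
        have := res.exact0 m
        simp only [Set.mem_range] at this
        rw [← this]; simp
      rw [hk] at this
      simpa using this
    | succ i ih =>
      have := step (a (i + 1)) (r + 1 + i + 1) (res.d i) (free_comm _ _ _ (hdh i)) (hkeri i) l hl hall ih.2
      have hk : LinearMap.ker (res.d i) = LinearMap.range (res.d (i + 1)) := by
        ext m
        exact res.exactSeq i m
      rw [hk] at this
      push_cast
      rw [← add_assoc]
      exact this
  have hlo : ∀ i : ℕ, ∀ s, (r : ℤ) + 1 + i ≤ a i s := by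
    intro i
    induction i with
    | zero =>
      intro s
      by_contra! h
      have h0 : (T.subtype ∘ₗ res.ε) (Finsupp.single s 1) = 0 := by
        rcases hεh s with h1 | ⟨m, hm, h1⟩
        · exact h1
        · exact hlow _ (res.ε (Finsupp.single s 1)).2 m h1 (by push_cast at h; omega)
      have := hker0 _ h0 s
      rw [Finsupp.single_eq_same] at this
      exact one_notMem_max this
    | succ i ih =>
      intro s
      by_contra! h
      have h0 : res.d i (Finsupp.single s 1) = 0 := by
        ext1 s'
        have h2 := ih s'
        obtain ⟨j, s⟩ := s
        obtain ⟨j', s'⟩ := s'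
        by_cases hj : j' = j + 1
        · exact res.minimal i j j' s s' hj
        · rcases res.graded i j j' s s' with h1 | ⟨m, hm, h1⟩
          · exact h1
          · simp only [a] at h h2
            push_cast at h
            omega
      have := hkeri i _ h0 s
      rw [Finsupp.single_eq_same] at this
      exact one_notMem_max this
  intro i j hj
  have s : Fin (res.β i j) := ⟨0, Nat.pos_of_ne_zero hj⟩
  have h1 := (hup i).1 ⟨j, s⟩
  have h2 := hlo i ⟨j, s⟩
  simp only [a] at h1 h2
  omega

end res
end St

namespace St
section prelim
variable {k : Type} [Field k] {N : ℕ}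

/-- the ideal generated by the last variables -/
noncomputable def ysI (k : Type) [Field k] (N e : ℕ) : Ideal (MvPolynomial (Fin N) k) :=
  Ideal.span (X '' {i : Fin N | e ≤ (i : ℕ)})

lemma tail_eq (e : ℕ) (I : Ideal (MvPolynomial (Fin N) k)) :
    Paper.tailVarsIdeal k e I = (ysI k N e).map (Ideal.Quotient.mk I) := by
  unfold Paper.tailVarsIdeal ysI
  rw [Ideal.map_span]
  congr 1
  ext y
  constructor
  · rintro ⟨i, hi, rfl⟩; exact ⟨_, ⟨i, hi, rfl⟩, rfl⟩
  · rintro ⟨_, ⟨i, hi, rfl⟩, rfl⟩; exact ⟨i, hi, rfl⟩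

lemma mk_mem_tail (e : ℕ) (I : Ideal (MvPolynomial (Fin N) k)) (f : MvPolynomial (Fin N) k) :
    Ideal.Quotient.mk I f ∈ Paper.tailVarsIdeal k e I ↔ f ∈ I ⊔ ysI k N e := by
  rw [tail_eq, ← Ideal.mem_comap, Ideal.comap_map_of_surjective _ Ideal.Quotient.mk_surjective,
    sup_comm, ← RingHom.ker_eq_comap_bot, Ideal.mk_ker]

lemma homog_hc {I : Ideal (MvPolynomial (Fin N) k)} (hI : Paper.IdealHomog k I) (d : ℤ)
    {f : MvPolynomial (Fin N) k} (hf : f ∈ I) : hc k N d f ∈ I := by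
  by_cases h : 0 ≤ d
  · lift d to ℕ using h
    rw [hc_nat]; exact hI f hf d
  · rw [hc, if_neg h]; exact I.zero_mem

lemma homog_sup {I J : Ideal (MvPolynomial (Fin N) k)} (hI : Paper.IdealHomog k I)
    (hJ : Paper.IdealHomog k J) : Paper.IdealHomog k (I ⊔ J) := by
  intro f hf d
  obtain ⟨a, ha, b, hb, rfl⟩ := Submodule.mem_sup.1 hf
  rw [map_add]
  exact Submodule.add_mem_sup (hI a ha d) (hJ b hb d)

lemma homog_singleton {z : MvPolynomial (Fin N) k} {c : ℕ} (hz : z.IsHomogeneous c) :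
    Paper.IdealHomog k (Ideal.span {z}) := by
  intro f hf d
  rw [Ideal.mem_span_singleton'] at hf ⊢
  obtain ⟨a, rfl⟩ := hf
  exact ⟨hc k N (d - c) a, by rw [← hc_nat, hc_mul (Or.inr ⟨c, rfl, hz⟩)]⟩

lemma homog_span_X (t : Set (Fin N)) :
    Paper.IdealHomog k (Ideal.span (X '' t) : Ideal (MvPolynomial (Fin N) k)) := by
  intro f hf d
  rw [mem_ideal_span_X_image] at hf ⊢
  intro m hm
  refine hf m ?_
  rw [mem_support_iff, coeff_homogeneousComponent] at hm
  rw [mem_support_iff]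
  intro h; apply hm; simp [h]

lemma homog_bot : Paper.IdealHomog k (⊥ : Ideal (MvPolynomial (Fin N) k)) := by
  intro f hf d
  rw [Ideal.mem_bot] at hf ⊢; rw [hf, map_zero]

lemma homog_K {I : Ideal (MvPolynomial (Fin N) k)} (hI : Paper.IdealHomog k I) (e : ℕ) :
    Paper.IdealHomog k (I ⊔ ysI k N e) := homog_sup hI (homog_span_X _)

lemma finite_B {e : ℕ} {I : Ideal (MvPolynomial (Fin N) k)}
    (hNN : Paper.IsNoetherNormalization k e I) :
    Module.Finite k ((MvPolynomial (Fin N) k ⧸ I) ⧸ Paper.tailVarsIdeal k e I) := by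
  have h1 := hNN.2
  let q : (MvPolynomial (Fin N) k ⧸ I) →+* ((MvPolynomial (Fin N) k ⧸ I) ⧸ Paper.tailVarsIdeal k e I) :=
    Ideal.Quotient.mk (Paper.tailVarsIdeal k e I)
  have hq : Function.Surjective q := Ideal.Quotient.mk_surjective
  have h2 := (RingHom.Finite.of_surjective (A := (MvPolynomial (Fin N) k ⧸ I))
    (B := ((MvPolynomial (Fin N) k ⧸ I) ⧸ Paper.tailVarsIdeal k e I)) q hq).comp h1
  have h3 : (q.comp (Paper.nnMap k e I).toRingHom)
      = (algebraMap k ((MvPolynomial (Fin N) k ⧸ I) ⧸ Paper.tailVarsIdeal k e I)).comp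
          (MvPolynomial.constantCoeff) := by
    apply MvPolynomial.ringHom_ext
    · intro a
      simp only [RingHom.comp_apply, constantCoeff_C]
      have : (Paper.nnMap k e I).toRingHom (C a) = algebraMap k _ a := by
        exact (Paper.nnMap k e I).commutes a
      rw [this]; rfl
    · intro i
      simp only [RingHom.comp_apply, constantCoeff_X, map_zero]
      refine Ideal.Quotient.eq_zero_iff_mem.2 ?_
      have : (Paper.nnMap k e I).toRingHom (X i) = Ideal.Quotient.mk I (X i.1) := by
        simp [Paper.nnMap]
      rw [this]
      exact Ideal.subset_span ⟨i.1, i.2, rfl⟩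
  rw [h3] at h2
  exact RingHom.finite_algebraMap.1 (RingHom.Finite.of_comp_finite h2)

lemma X_pow_mem {e : ℕ} {I : Ideal (MvPolynomial (Fin N) k)} (hI : Paper.IdealHomog k I)
    (hNN : Paper.IsNoetherNormalization k e I) (i : Fin N) :
    ∃ m : ℕ, (X i : MvPolynomial (Fin N) k) ^ m ∈ I ⊔ ysI k N e := by
  have := finite_B hNN
  let π : MvPolynomial (Fin N) k →ₐ[k] ((MvPolynomial (Fin N) k ⧸ I) ⧸ Paper.tailVarsIdeal k e I) :=
    (Ideal.Quotient.mkₐ k _).comp (Ideal.Quotient.mkₐ k I)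
  obtain ⟨p, hp, hp0⟩ : IsIntegral k (π (X i)) := IsIntegral.of_finite k _
  have h1 : Polynomial.aeval (X i : MvPolynomial (Fin N) k) p ∈ I ⊔ ysI k N e := by
    rw [← mk_mem_tail, ← Ideal.Quotient.eq_zero_iff_mem]
    change π _ = 0
    rw [← Polynomial.aeval_algHom_apply]
    exact hp0
  have h2 := homog_K hI e _ h1 p.natDegree
  refine ⟨p.natDegree, ?_⟩
  convert h2 using 1
  rw [Polynomial.aeval_eq_sum_range, map_sum]
  rw [Finset.sum_eq_single p.natDegree]
  · rw [map_smul, homogeneousComponent_eq_self (isHomogeneous_X_pow i _), Polynomial.Monic.coeff_natDegree hp,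
      one_smul]
  · intro b _ hb
    rw [map_smul, homogeneousComponent_of_mem (isHomogeneous_X_pow i b), if_neg (Ne.symm hb), smul_zero]
  · intro h; simp at h

lemma mem_of_monomials {I : Ideal (MvPolynomial (Fin N) k)} {f : MvPolynomial (Fin N) k}
    (h : ∀ m ∈ f.support, monomial m (1 : k) ∈ I) : f ∈ I := by
  rw [f.as_sum]
  refine I.sum_mem fun m hm => ?_
  have : monomial m (coeff m f) = C (coeff m f) * monomial m 1 := by rw [C_mul_monomial, mul_one]
  rw [this]; exact I.mul_mem_left _ (h m hm)

lemma exists_large {K : Ideal (MvPolynomial (Fin N) k)}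
    (hK : ∀ i, ∃ m : ℕ, (X i : MvPolynomial (Fin N) k) ^ m ∈ K) :
    ∃ s : ℕ, ∀ d ≥ s, ∀ f : MvPolynomial (Fin N) k, f.IsHomogeneous d → f ∈ K := by
  choose m hm using hK
  refine ⟨(∑ i, m i) + 1, fun d hd f hf => mem_of_monomials fun a ha => ?_⟩
  have hdeg : a.degree = d := by
    by_contra h; exact (mem_support_iff.1 ha) (hf.coeff_eq_zero h)
  obtain ⟨i, hi⟩ : ∃ i, m i ≤ a i := by
    by_contra! h
    have : a.degree ≤ ∑ i, m i := by
      rw [Finsupp.degree_eq_sum]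
      exact Finset.sum_le_sum fun i _ => (h i).le
    omega
  have : a = Finsupp.single i (m i) + (a - Finsupp.single i (m i)) := by
    rw [add_tsub_cancel_of_le]
    simpa using hi
  rw [this, ← mul_one (1 : k), ← monomial_mul]
  refine K.mul_mem_right _ ?_
  rw [← X_pow_eq_monomial]; exact hm i

lemma large_of {K : Ideal (MvPolynomial (Fin N) k)} {s : ℕ}
    (h : ∀ f : MvPolynomial (Fin N) k, f.IsHomogeneous (s + 1) → f ∈ K) :
    ∀ d ≥ s + 1, ∀ f : MvPolynomial (Fin N) k, f.IsHomogeneous d → f ∈ K := by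
  intro d hd
  induction d, hd using Nat.le_induction with
  | base => exact h
  | succ d hd ih =>
    intro f hf
    refine mem_of_monomials fun a ha => ?_
    have hdeg : a.degree = d + 1 := by
      by_contra h; exact (mem_support_iff.1 ha) (hf.coeff_eq_zero h)
    obtain ⟨i, hi⟩ : ∃ i, 1 ≤ a i := by
      by_contra! h
      have : a = 0 := by ext i; simpa using h i
      simp [this] at hdeg
    have : a = Finsupp.single i 1 + (a - Finsupp.single i 1) := by
      rw [add_tsub_cancel_of_le]
      simpa using hi
    have h2 : (a - Finsupp.single i 1).degree = d := by
      have h3 := congrArg Finsupp.degree this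
      rw [map_add, Finsupp.degree_single] at h3
      omega
    rw [this, ← mul_one (1 : k), ← monomial_mul]
    exact K.mul_mem_left _ (ih _ (isHomogeneous_monomial _ h2))

lemma red_spec {e r : ℕ} {I : Ideal (MvPolynomial (Fin N) k)} (hI : Paper.IdealHomog k I)
    (hNN : Paper.IsNoetherNormalization k e I) (hr : Paper.reductionNumber k e I = r) :
    0 < r ∧ ∀ d ≥ r + 1, ∀ f : MvPolynomial (Fin N) k, f.IsHomogeneous d → f ∈ I ⊔ ysI k N e := by
  obtain ⟨s, hs⟩ := exists_large (X_pow_mem hI hNN)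
  have hne : {t | 0 < t ∧ Paper.quotComponent k I (t + 1) ≤
      (Paper.tailVarsIdeal k e I).restrictScalars k}.Nonempty := by
    refine ⟨s + 1, by omega, ?_⟩
    rintro _ ⟨f, hf, rfl⟩
    exact (mk_mem_tail e I f).2 (hs _ (by omega) f hf)
  have := Nat.sInf_mem hne
  change 0 < Paper.reductionNumber k e I ∧ Paper.quotComponent k I (Paper.reductionNumber k e I + 1) ≤ _ at this
  rw [hr] at this
  refine ⟨this.1, large_of fun f hf => ?_⟩
  rw [← mk_mem_tail]
  exact this.2 ⟨f, hf, rfl⟩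

end prelim
end St

namespace St
section hilb
variable {k : Type} [Field k] {N : ℕ}

instance homFin (d : ℕ) : Module.Finite k (homogeneousSubmodule (Fin N) k d) :=
  Module.Finite.iff_fg.2 (homogeneousSubmodule_fg _ _ d)

/-- degree `d` part of an ideal -/
noncomputable def Ig (I : Ideal (MvPolynomial (Fin N) k)) (d : ℕ) : Submodule k (MvPolynomial (Fin N) k) :=
  homogeneousSubmodule (Fin N) k d ⊓ I.restrictScalars k

lemma mem_Ig {I : Ideal (MvPolynomial (Fin N) k)} {d : ℕ} {f : MvPolynomial (Fin N) k} :
    f ∈ Ig I d ↔ f.IsHomogeneous d ∧ f ∈ I := Iff.rfl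

instance IgFin (I : Ideal (MvPolynomial (Fin N) k)) (d : ℕ) : Module.Finite k (Ig I d) :=
  Submodule.finiteDimensional_of_le (inf_le_left : _ ≤ homogeneousSubmodule (Fin N) k d)

lemma fr_map {V W : Type} [AddCommGroup V] [Module k V] [AddCommGroup W] [Module k W]
    {f : V →ₗ[k] W} (hf : Function.Injective f) (p : Submodule k V) :
    Module.finrank k (p.map f) = Module.finrank k p :=
  (Submodule.equivMapOfInjective f hf p).symm.finrank_eq

lemma hilb_add (I : Ideal (MvPolynomial (Fin N) k)) (d : ℕ) :
    Paper.hilbFn k I d + Module.finrank k (Ig I d) =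
      Module.finrank k (homogeneousSubmodule (Fin N) k d) := by
  let φ := (Ideal.Quotient.mkₐ k I).toLinearMap.domRestrict (homogeneousSubmodule (Fin N) k d)
  have h1 := φ.finrank_range_add_finrank_ker
  have h2 : LinearMap.range φ = Paper.quotComponent k I d := by
    rw [LinearMap.range_domRestrict]; rfl
  have h3 : (LinearMap.ker φ).map (homogeneousSubmodule (Fin N) k d).subtype = Ig I d := by
    ext f
    simp only [Submodule.mem_map, LinearMap.mem_ker, mem_Ig]
    constructor
    · rintro ⟨⟨g, hg⟩, h, rfl⟩
      exact ⟨hg, Ideal.Quotient.eq_zero_iff_mem.1 h⟩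
    · rintro ⟨h, hf⟩
      exact ⟨⟨f, h⟩, Ideal.Quotient.eq_zero_iff_mem.2 hf, rfl⟩
  rw [← h1, h2, ← h3]
  congr 1
  exact (fr_map (Submodule.subtype_injective (homogeneousSubmodule (Fin N) k d)) (LinearMap.ker φ))

lemma hilb_anti {I J : Ideal (MvPolynomial (Fin N) k)} (h : I ≤ J) (d : ℕ) :
    Paper.hilbFn k J d ≤ Paper.hilbFn k I d := by
  have h1 := hilb_add I d
  have h2 := hilb_add J d
  have h3 : Module.finrank k (Ig I d) ≤ Module.finrank k (Ig J d) :=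
    Submodule.finrank_mono (inf_le_inf_left _ h)
  omega

lemma mul_inj {z : MvPolynomial (Fin N) k} (hz : z ≠ 0) :
    Function.Injective (LinearMap.mulLeft k z) := fun _ _ h => mul_left_cancel₀ hz h

lemma hilb_step {I : Ideal (MvPolynomial (Fin N) k)} (hI : Paper.IdealHomog k I)
    {z : MvPolynomial (Fin N) k} (hz : z.IsHomogeneous 1) (hz0 : z ≠ 0)
    (hreg : ∀ f, z * f ∈ I → f ∈ I) (d : ℕ) :
    Paper.hilbFn k (I ⊔ Ideal.span {z}) (d + 1) + Paper.hilbFn k I d = Paper.hilbFn k I (d + 1) := by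
  have a1 := hilb_add I d
  have a2 := hilb_add I (d + 1)
  have a3 := hilb_add (I ⊔ Ideal.span {z}) (d + 1)
  have hsup : Ig (I ⊔ Ideal.span {z}) (d + 1) =
      (homogeneousSubmodule (Fin N) k d).map (LinearMap.mulLeft k z) ⊔ Ig I (d + 1) := by
    apply le_antisymm
    · rintro f ⟨hf, hm⟩
      obtain ⟨a, ha, b, hb, rfl⟩ := Submodule.mem_sup.1 hm
      obtain ⟨c, rfl⟩ := Ideal.mem_span_singleton'.1 hb
      have e : a + c * z = hc k N (d + 1 : ℕ) a + hc k N d c * z := by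
        rw [← homogeneousComponent_eq_self hf, ← hc_nat, map_add,
          hc_mul (Or.inr ⟨1, rfl, hz⟩)]
        simp
      rw [e, add_comm (hc k N _ _), hc_nat, hc_nat, mul_comm]
      exact Submodule.add_mem_sup ⟨_, homogeneousComponent_isHomogeneous d c, rfl⟩
        ⟨homogeneousComponent_isHomogeneous _ a, hI a ha _⟩
    · refine sup_le ?_ (inf_le_inf_left _ (fun x hx => Ideal.mem_sup_left hx))
      rintro _ ⟨f, hf, rfl⟩
      refine ⟨?_, Ideal.mem_sup_right (Ideal.mul_mem_right _ _ (Ideal.mem_span_singleton_self z))⟩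
      have := hz.mul hf
      rwa [add_comm] at this
  have hinf : (homogeneousSubmodule (Fin N) k d).map (LinearMap.mulLeft k z) ⊓ Ig I (d + 1) =
      (Ig I d).map (LinearMap.mulLeft k z) := by
    apply le_antisymm
    · rintro _ ⟨⟨f, hf, rfl⟩, hm⟩
      exact ⟨f, ⟨hf, hreg f hm.2⟩, rfl⟩
    · rintro _ ⟨f, hf, rfl⟩
      refine ⟨⟨f, hf.1, rfl⟩, ?_, Ideal.mul_mem_left _ _ hf.2⟩
      have := hz.mul hf.1
      rwa [add_comm] at this
  have h := Submodule.finrank_sup_add_finrank_inf_eq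
    ((homogeneousSubmodule (Fin N) k d).map (LinearMap.mulLeft k z)) (Ig I (d + 1))
  rw [← hsup, hinf, fr_map (mul_inj hz0),
    fr_map (mul_inj hz0)] at h
  omega

lemma hilb_zero_deg {I : Ideal (MvPolynomial (Fin N) k)} (hI : Paper.IdealHomog k I)
    {z : MvPolynomial (Fin N) k} (hz : z.IsHomogeneous 1) :
    Paper.hilbFn k (I ⊔ Ideal.span {z}) 0 = Paper.hilbFn k I 0 := by
  have a2 := hilb_add I 0
  have a3 := hilb_add (I ⊔ Ideal.span {z}) 0
  have : Ig (I ⊔ Ideal.span {z}) 0 = Ig I 0 := by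
    apply le_antisymm
    · rintro f ⟨hf, hm⟩
      obtain ⟨a, ha, b, hb, rfl⟩ := Submodule.mem_sup.1 hm
      obtain ⟨c, rfl⟩ := Ideal.mem_span_singleton'.1 hb
      have e : a + c * z = hc k N (0 : ℕ) a := by
        rw [← homogeneousComponent_eq_self hf, ← hc_nat, map_add,
          hc_mul (Or.inr ⟨1, rfl, hz⟩)]
        simp [hc]
      rw [e, hc_nat]
      exact ⟨homogeneousComponent_isHomogeneous _ a, hI a ha _⟩
    · exact inf_le_inf_left _ (fun x hx => Ideal.mem_sup_left hx)
  rw [this] at a3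
  omega

/-- summation operator -/
def SS (F : ℕ → ℕ) (d : ℕ) : ℕ := ∑ j ∈ Finset.range (d + 1), F j

lemma SS_inj {F G : ℕ → ℕ} (h : SS F = SS G) : F = G := by
  funext d
  rcases d with _ | d
  · simpa [SS] using congrFun h 0
  · have h1 := congrFun h d
    have h2 := congrFun h (d + 1)
    simp only [SS] at h1 h2
    rw [Finset.sum_range_succ, Finset.sum_range_succ _ (d + 1), h1] at h2
    omega

lemma SS_iter_inj (c : ℕ) {F G : ℕ → ℕ} (h : SS^[c] F = SS^[c] G) : F = G :=
  Function.Injective.iterate (fun _ _ => SS_inj) c h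

lemma hilb_SS {I : Ideal (MvPolynomial (Fin N) k)} (hI : Paper.IdealHomog k I)
    {z : MvPolynomial (Fin N) k} (hz : z.IsHomogeneous 1) (hz0 : z ≠ 0)
    (hreg : ∀ f, z * f ∈ I → f ∈ I) :
    Paper.hilbFn k I = SS (Paper.hilbFn k (I ⊔ Ideal.span {z})) := by
  funext d
  induction d with
  | zero => simp [SS, hilb_zero_deg hI hz]
  | succ d ih =>
    rw [← hilb_step hI hz hz0 hreg d, ih]
    simp only [SS]
    rw [Finset.sum_range_succ _ (d + 1), add_comm]

/-- successive regularity of linear forms modulo an ideal -/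
def RegL : Ideal (MvPolynomial (Fin N) k) → List (MvPolynomial (Fin N) k) → Prop
  | _, [] => True
  | I, z :: l => z.IsHomogeneous 1 ∧ z ≠ 0 ∧ (∀ f, z * f ∈ I → f ∈ I) ∧ RegL (I ⊔ Ideal.span {z}) l

lemma hilb_list (l : List (MvPolynomial (Fin N) k)) :
    ∀ (I : Ideal (MvPolynomial (Fin N) k)), Paper.IdealHomog k I → RegL I l →
    Paper.hilbFn k I = SS^[l.length] (Paper.hilbFn k (I ⊔ Ideal.span {z | z ∈ l})) := by
  induction l with
  | nil => intro I _ _; simp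
  | cons z l ih =>
    intro I hI h
    rw [List.length_cons, Function.iterate_succ_apply', hilb_SS hI h.1 h.2.1 h.2.2.1,
      ih _ (homog_sup hI (homog_singleton h.1)) h.2.2.2]
    congr 3
    rw [sup_assoc, ← Ideal.span_union]
    congr 3
    ext; simp

lemma span_X_insert (t : Set (Fin N)) (i : Fin N) :
    (Ideal.span (X '' t) ⊔ Ideal.span {X i} : Ideal (MvPolynomial (Fin N) k)) =
      Ideal.span (X '' (insert i t)) := by
  rw [Set.image_insert_eq, Ideal.span_insert, sup_comm]

lemma reg_vars (l : List (Fin N)) : ∀ (t : Set (Fin N)), l.Nodup → (∀ i ∈ l, i ∉ t) →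
    RegL (Ideal.span (X '' t) : Ideal (MvPolynomial (Fin N) k)) (l.map X) := by
  induction l with
  | nil => intro t _ _; trivial
  | cons i l ih =>
    intro t hnd hdis
    rw [List.nodup_cons] at hnd
    refine ⟨isHomogeneous_X _ _, X_ne_zero i, fun f hf => X_mul_mem (hdis i (by simp)) hf, ?_⟩
    rw [span_X_insert]
    refine ih _ hnd.2 ?_
    intro j hj hjt
    rcases hjt with rfl | hjt
    · exact hnd.1 hj
    · exact hdis j (by simp [hj]) hjt

lemma hilb_vars (t : Set (Fin N)) (l : List (Fin N)) (hnd : l.Nodup) (hdis : ∀ i ∈ l, i ∉ t) :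
    Paper.hilbFn k (Ideal.span (X '' t)) =
      SS^[l.length] (Paper.hilbFn k (Ideal.span (X '' (t ∪ {i | i ∈ l})))) := by
  have := hilb_list (l.map X) _ (homog_span_X (k := k) t) (reg_vars l t hnd hdis)
  rw [this, List.length_map, ← Ideal.span_union, Set.image_union]
  congr 4
  ext; simp

lemma hilb_top_vars : Paper.hilbFn k (Ideal.span (X '' (Set.univ : Set (Fin N)))) =
    fun d => if d = 0 then 1 else 0 := by
  funext d
  have h := hilb_add (Ideal.span (X '' (Set.univ : Set (Fin N))) : Ideal (MvPolynomial (Fin N) k)) d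
  split_ifs with hd
  · subst hd
    have h1 : Ig (Ideal.span (X '' (Set.univ : Set (Fin N))) : Ideal (MvPolynomial (Fin N) k)) 0 = ⊥ := by
      rw [eq_bot_iff]
      rintro f ⟨hf, hm⟩
      rw [Submodule.mem_bot]
      have : f = C (coeff 0 f) := totalDegree_eq_zero_iff_eq_C.1 ((totalDegree_zero_iff_isHomogeneous _).2 hf)
      by_contra hne
      have h0 : coeff 0 f ≠ 0 := by
        intro h; rw [h, C_0] at this; exact hne this
      apply one_notMem_max (k := k) (N := N)
      have h2 := Ideal.mul_mem_left _ (C (coeff 0 f)⁻¹) (show f ∈ Ideal.span (X '' (Set.univ : Set (Fin N))) from hm)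
      rw [this, ← C_mul] at h2
      simpa [h0] using h2
    have h2 : Module.finrank k (homogeneousSubmodule (Fin N) k 0) = 1 := by
      rw [homogeneousSubmodule_zero]
      rw [Submodule.one_eq_span]
      exact finrank_span_singleton one_ne_zero
    rw [h1, h2, finrank_bot] at h
    omega
  · have h1 : Ig (Ideal.span (X '' (Set.univ : Set (Fin N))) : Ideal (MvPolynomial (Fin N) k)) d =
        homogeneousSubmodule (Fin N) k d := by
      apply inf_eq_left.2
      intro f hf
      exact mem_max_of_pos (d := d) (by omega) (Or.inr ⟨d, rfl, hf⟩)
    rw [h1] at h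
    omega

end hilb
end St

namespace St
section hilb2
variable {k : Type} [Field k] {N : ℕ}

lemma SS_formula (c : ℕ) : ∀ (F : ℕ → ℕ) (d : ℕ),
    SS^[c + 1] F d = ∑ j ∈ Finset.range (d + 1), F j * (c + (d - j)).choose c := by
  induction c with
  | zero => intro F d; simp [SS]
  | succ c ih =>
    intro F d
    rw [Function.iterate_succ_apply']
    induction d with
    | zero =>
      have := ih F 0
      simp only [SS, zero_add, Finset.sum_range_one, this]
      simp
    | succ d ihd =>
      have : SS (SS^[c + 1] F) (d + 1) = SS (SS^[c + 1] F) d + SS^[c + 1] F (d + 1) := by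
        simp only [SS]; rw [Finset.sum_range_succ _ (d + 1)]
      rw [this, ihd, ih, Finset.sum_range_succ _ (d + 1), Finset.sum_range_succ _ (d + 1), ← add_assoc,
        ← Finset.sum_add_distrib]
      congr 1
      · refine Finset.sum_congr rfl fun j hj => ?_
        rw [Finset.mem_range] at hj
        rw [show c + 1 + (d + 1 - j) = (c + (d + 1 - j)) + 1 by omega, Nat.choose_succ_succ,
          show c + 1 + (d - j) = c + (d + 1 - j) by omega]
        ring
      · simp

lemma SS_delta (c d : ℕ) : SS^[c + 1] (fun d => if d = 0 then 1 else 0) d = (c + d).choose c := by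
  rw [SS_formula, Finset.sum_eq_single 0]
  · simp
  · intro b _ hb; simp [hb]
  · simp

/-- indices of the last variables -/
def ysL (N e : ℕ) : List (Fin N) := (List.finRange N).filter (fun i => e ≤ (i : ℕ))
/-- indices of the first variables -/
def xsL (N e : ℕ) : List (Fin N) := (List.finRange N).filter (fun i => (i : ℕ) < e)

lemma mem_ysL {e : ℕ} {i : Fin N} : i ∈ ysL N e ↔ e ≤ (i : ℕ) := by simp [ysL]
lemma mem_xsL {e : ℕ} {i : Fin N} : i ∈ xsL N e ↔ (i : ℕ) < e := by simp [xsL]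
lemma nodup_ysL (e : ℕ) : (ysL N e).Nodup := (List.nodup_finRange N).filter _
lemma nodup_xsL (e : ℕ) : (xsL N e).Nodup := (List.nodup_finRange N).filter _

lemma length_xsL {e : ℕ} (he : e ≤ N) : (xsL N e).length = e := by
  rw [← List.toFinset_card_of_nodup (nodup_xsL e)]
  have : (xsL N e).toFinset = Finset.univ.filter (fun i : Fin N => (i : ℕ) < e) := by
    ext i; simp [mem_xsL]
  rw [this, Fin.card_filter_val_lt]
  omega

lemma card_ys (n e : ℕ) : (Finset.univ.filter (fun i : Fin (n + e + 1) => e ≤ (i : ℕ))).card = n + 1 := by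
  have h1 := Finset.card_filter_add_card_filter_not (s := (Finset.univ : Finset (Fin (n + e + 1))))
    (fun i => (i : ℕ) < e)
  rw [Fin.card_filter_val_lt] at h1
  simp at h1
  omega

lemma length_ysL (n e : ℕ) : (ysL (n + e + 1) e).length = n + 1 := by
  rw [← List.toFinset_card_of_nodup (nodup_ysL e)]
  have : (ysL (n + e + 1) e).toFinset = Finset.univ.filter (fun i : Fin (n + e + 1) => e ≤ (i : ℕ)) := by
    ext i; simp [mem_ysL]
  rw [this, card_ys]

lemma hilb_ysI (e : ℕ) (he : 0 < e) (heN : e ≤ N) (d : ℕ) :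
    Paper.hilbFn k (ysI k N e) d = (e - 1 + d).choose (e - 1) := by
  have h := hilb_vars (k := k) {i : Fin N | e ≤ (i : ℕ)} (xsL N e) (nodup_xsL e) (by
    intro i hi; rw [mem_xsL] at hi; simpa using hi)
  have h2 : ({i : Fin N | e ≤ (i : ℕ)} ∪ {i | i ∈ xsL N e}) = Set.univ := by
    ext i; simp [mem_xsL]; omega
  rw [h2, hilb_top_vars, length_xsL heN] at h
  unfold ysI
  rw [h]
  obtain ⟨c, rfl⟩ : ∃ c, e = c + 1 := ⟨e - 1, by omega⟩
  rw [SS_delta]; simp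

lemma sum_hilb_ysI (e r : ℕ) (he : 0 < e) (heN : e ≤ N) :
    ∑ d ∈ Finset.range (r + 1), Paper.hilbFn k (ysI k N e) d = (e + r).choose r := by
  simp_rw [hilb_ysI e he heN]
  obtain ⟨c, rfl⟩ : ∃ c, e = c + 1 := ⟨e - 1, by omega⟩
  simp only [Nat.add_sub_cancel]
  have := Nat.sum_range_add_choose r c
  rw [show c + 1 + r = r + (c + 1) by ring, Nat.choose_symm_add, ← add_assoc, ← this]
  exact Finset.sum_congr rfl fun j _ => by rw [add_comm]

lemma hilb_bot (n e : ℕ) :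
    Paper.hilbFn k (⊥ : Ideal (MvPolynomial (Fin (n + e + 1)) k)) =
      SS^[n + 1] (Paper.hilbFn k (ysI k (n + e + 1) e)) := by
  have h := hilb_vars (k := k) ∅ (ysL (n + e + 1) e) (nodup_ysL e) (by simp)
  rw [length_ysL] at h
  simpa [ysI, mem_ysL] using h

lemma mu_eq_finrank (e : ℕ) (I : Ideal (MvPolynomial (Fin N) k)) :
    Paper.muS k e I = Module.finrank k (MvPolynomial (Fin N) k ⧸ (I ⊔ ysI k N e)) := by
  let π : MvPolynomial (Fin N) k →ₐ[k] ((MvPolynomial (Fin N) k ⧸ I) ⧸ Paper.tailVarsIdeal k e I) :=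
    (Ideal.Quotient.mkₐ k _).comp (Ideal.Quotient.mkₐ k I)
  have hk : RingHom.ker π = I ⊔ ysI k N e := by
    ext f
    rw [← mk_mem_tail, RingHom.mem_ker, ← Ideal.Quotient.eq_zero_iff_mem]
    rfl
  have hs : Function.Surjective π := by
    intro b
    obtain ⟨a, rfl⟩ := Ideal.Quotient.mk_surjective b
    obtain ⟨f, rfl⟩ := Ideal.Quotient.mk_surjective a
    exact ⟨f, rfl⟩
  unfold Paper.muS
  rw [← hk]
  exact (Ideal.quotientKerAlgEquivOfSurjective hs).toLinearEquiv.finrank_eq.symm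

instance qcFin (K : Ideal (MvPolynomial (Fin N) k)) (d : ℕ) : Module.Finite k (Paper.quotComponent k K d) :=
  inferInstanceAs (Module.Finite k (Submodule.map _ _))

lemma finrank_quot {K : Ideal (MvPolynomial (Fin N) k)} (hK : Paper.IdealHomog k K) (r : ℕ)
    (h : ∀ d ≥ r + 1, ∀ f : MvPolynomial (Fin N) k, f.IsHomogeneous d → f ∈ K) :
    Module.finrank k (MvPolynomial (Fin N) k ⧸ K) = ∑ d ∈ Finset.range (r + 1), Paper.hilbFn k K d := by
  let Ψ : (∀ d : Fin (r + 1), Paper.quotComponent k K d) →ₗ[k] (MvPolynomial (Fin N) k ⧸ K) :=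
    LinearMap.lsum k (fun d : Fin (r + 1) => Paper.quotComponent k K d) k
      (fun d => (Paper.quotComponent k K d).subtype)
  have hΨ : ∀ v, Ψ v = ∑ d, (v d : MvPolynomial (Fin N) k ⧸ K) := by
    intro v; simp [Ψ]
  have hb : Function.Bijective Ψ := by
    constructor
    · rw [injective_iff_map_eq_zero]
      intro v hv
      rw [hΨ] at hv
      choose f hf hfv using fun d => (v d).2
      have h1 : ∑ d, f d ∈ K := by
        rw [← Ideal.Quotient.eq_zero_iff_mem, map_sum, ← hv]
        exact Finset.sum_congr rfl fun d _ => hfv d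
      funext d
      have h2 := hK _ h1 d
      rw [map_sum, Finset.sum_eq_single d] at h2
      · rw [homogeneousComponent_eq_self (hf d)] at h2
        ext
        rw [← hfv d]
        exact Ideal.Quotient.eq_zero_iff_mem.2 h2
      · intro b _ hb
        rw [homogeneousComponent_of_mem (hf b), if_neg]
        intro h; exact hb (Fin.ext h.symm)
      · simp
    · intro b
      obtain ⟨f, rfl⟩ := Ideal.Quotient.mk_surjective b
      refine ⟨fun d => ⟨_, homogeneousComponent d f, homogeneousComponent_isHomogeneous _ _, rfl⟩, ?_⟩
      rw [hΨ]
      change ∑ d : Fin (r + 1), Ideal.Quotient.mk K (homogeneousComponent d f) = _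
      rw [← map_sum, ← sub_eq_zero, ← map_sub, Ideal.Quotient.eq_zero_iff_mem]
      rw [Fin.sum_univ_eq_sum_range (fun d => homogeneousComponent d f) (r + 1)]
      have h1 : f = ∑ d ∈ Finset.range (f.totalDegree + 1 + (r + 1)), homogeneousComponent d f := by
        conv_lhs => rw [← sum_homogeneousComponent f]
        apply Finset.sum_subset
        · intro d; simp; omega
        · intro d _ hd
          apply homogeneousComponent_eq_zero
          simpa using hd
      rw [add_comm _ (r + 1), Finset.sum_range_add] at h1
      have h2 : ∑ d ∈ Finset.range (r + 1), homogeneousComponent d f - f =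
          - ∑ x ∈ Finset.range (f.totalDegree + 1), homogeneousComponent (r + 1 + x) f := by
        linear_combination -h1
      rw [h2]
      refine K.neg_mem (K.sum_mem fun d _ => ?_)
      exact h _ (by omega) _ (homogeneousComponent_isHomogeneous _ _)
  rw [← (LinearEquiv.ofBijective Ψ hb).finrank_eq, Module.finrank_pi_fintype,
    ← Fin.sum_univ_eq_sum_range (fun d => Paper.hilbFn k K d)]
  rfl

lemma mu_eq {e r : ℕ} {I : Ideal (MvPolynomial (Fin N) k)} (hI : Paper.IdealHomog k I)
    (h : ∀ d ≥ r + 1, ∀ f : MvPolynomial (Fin N) k, f.IsHomogeneous d → f ∈ I ⊔ ysI k N e) :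
    Paper.muS k e I = ∑ d ∈ Finset.range (r + 1), Paper.hilbFn k (I ⊔ ysI k N e) d := by
  rw [mu_eq_finrank, finrank_quot (homog_K hI e) r h]

lemma finrank_idealDeg (I : Ideal (MvPolynomial (Fin N) k)) (r : ℕ) :
    Module.finrank k (Paper.idealDeg k I r) = Module.finrank k (Ig I r) := by
  have : (Paper.idealDeg k I r).map ((I.subtype).restrictScalars k) = Ig I r := by
    unfold Paper.idealDeg
    simp only [Nat.cast_nonneg, if_true, Int.toNat_natCast]
    ext f
    rw [mem_Ig]
    constructor
    · rintro ⟨g, hg, rfl⟩; exact ⟨hg, g.2⟩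
    · rintro ⟨h1, h2⟩; exact ⟨⟨f, h2⟩, h1, rfl⟩
  rw [← this]
  exact (fr_map (f := (I.subtype).restrictScalars k) Subtype.val_injective (Paper.idealDeg k I r)).symm

end hilb2
end St

namespace St
section free
variable {k : Type} [Field k] {N : ℕ}

lemma span_X_le {t : Set (Fin N)} {b : MvPolynomial (Fin N) k} (hb : b ∈ Ideal.span (X '' t))
    (W : Submodule k (MvPolynomial (Fin N) k))
    (h : ∀ j ∈ t, ∀ m : Fin N →₀ ℕ, Finsupp.single j 1 + m ∈ b.support → X j * monomial m (1 : k) ∈ W) :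
    b ∈ W := by
  rw [mem_ideal_span_X_image] at hb
  rw [b.as_sum]
  refine W.sum_mem fun m hm => ?_
  obtain ⟨j, hj, hne⟩ := hb m hm
  have e : Finsupp.single j 1 + (m - Finsupp.single j 1) = m := by
    rw [add_tsub_cancel_of_le]
    simpa using Nat.one_le_iff_ne_zero.2 hne
  have h1 := h j hj (m - Finsupp.single j 1) (by rwa [e])
  have : monomial m (coeff m b) = (coeff m b) • (X j * monomial (m - Finsupp.single j 1) (1 : k)) := by
    rw [X, monomial_mul, e, smul_monomial]; simp
  rw [this]
  exact W.smul_mem _ h1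

/-- the part of an exponent in the first `e` variables -/
noncomputable def xp (e : ℕ) (m : Fin N →₀ ℕ) : Fin N →₀ ℕ := m.filter (fun i => (i : ℕ) < e)
/-- the part of an exponent in the last variables -/
noncomputable def yp (e : ℕ) (m : Fin N →₀ ℕ) : Fin N →₀ ℕ := m.filter (fun i => ¬ (i : ℕ) < e)

lemma xp_add_yp (e : ℕ) (m : Fin N →₀ ℕ) : xp e m + yp e m = m :=
  Finsupp.filter_add_filter_not _ _

lemma xp_add (e : ℕ) (m m' : Fin N →₀ ℕ) : xp e (m + m') = xp e m + xp e m' := Finsupp.filter_add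

lemma xp_single {e : ℕ} {i : Fin N} (hi : e ≤ (i : ℕ)) (c : ℕ) : xp e (Finsupp.single i c) = 0 := by
  unfold xp
  rw [Finsupp.filter_single_of_neg]; omega

lemma xp_eq_zero {e : ℕ} {m : Fin N →₀ ℕ} (h : ∀ i ∈ m.support, e ≤ (i : ℕ)) : xp e m = 0 := by
  unfold xp
  rw [Finsupp.filter_eq_zero_iff]
  intro i hi
  by_contra h0
  have := h i (Finsupp.mem_support_iff.2 h0)
  omega

/-- polynomials whose exponents have first part in `L` -/
noncomputable def VV (k : Type) [Field k] {N : ℕ} (e : ℕ) (L : Finset (Fin N →₀ ℕ)) :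
    Submodule k (MvPolynomial (Fin N) k) := restrictSupport k {m | xp e m ∈ L}

lemma mem_VV {e : ℕ} {L : Finset (Fin N →₀ ℕ)} {f : MvPolynomial (Fin N) k} :
    f ∈ VV k e L ↔ ∀ m ∈ f.support, xp e m ∈ L := by
  unfold VV; rw [mem_restrictSupport_iff]; rfl

lemma VV_mul {e : ℕ} {L : Finset (Fin N →₀ ℕ)} {f g : MvPolynomial (Fin N) k}
    (hf : f ∈ VV k e L) (hg : ∀ m ∈ g.support, ∀ i ∈ m.support, e ≤ (i : ℕ)) :
    g * f ∈ VV k e L := by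
  classical
  rw [mem_VV] at hf ⊢
  intro m hm
  obtain ⟨a, ha, b, hb, rfl⟩ := Finset.mem_add.1 (support_mul g f hm)
  rw [xp_add, xp_eq_zero (hg a ha), zero_add]
  exact hf b hb

lemma VV_X {e : ℕ} {L : Finset (Fin N →₀ ℕ)} {f : MvPolynomial (Fin N) k} {i : Fin N}
    (hi : e ≤ (i : ℕ)) (hf : f ∈ VV k e L) : X i * f ∈ VV k e L := by
  classical
  refine VV_mul hf fun m hm j hj => ?_
  rw [support_X, Finset.mem_singleton] at hm
  subst hm
  have := Finsupp.support_single_subset hj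
  rw [Finset.mem_singleton] at this
  rwa [this]

lemma VV_hom {e : ℕ} {L : Finset (Fin N →₀ ℕ)} {f : MvPolynomial (Fin N) k} (d : ℕ)
    (hf : f ∈ VV k e L) : homogeneousComponent d f ∈ VV k e L := by
  rw [mem_VV] at hf ⊢
  intro m hm
  refine hf m ?_
  rw [mem_support_iff, coeff_homogeneousComponent] at hm
  rw [mem_support_iff]
  intro h; apply hm; simp [h]

lemma exists_L (e : ℕ) (I : Ideal (MvPolynomial (Fin N) k))
    [Module.Finite k (MvPolynomial (Fin N) k ⧸ (I ⊔ ysI k N e))] :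
    ∃ L : Finset (Fin N →₀ ℕ), L.card ≤ Module.finrank k (MvPolynomial (Fin N) k ⧸ (I ⊔ ysI k N e)) ∧
      ∀ f : MvPolynomial (Fin N) k, ∃ v ∈ VV k e L, f - v ∈ I ⊔ ysI k N e := by
  classical
  let mk := Ideal.Quotient.mkₐ k (I ⊔ ysI k N e)
  let G : Set (MvPolynomial (Fin N) k ⧸ (I ⊔ ysI k N e)) :=
    Set.range fun m : Fin N →₀ ℕ => mk (monomial (xp e m) (1 : k))
  obtain ⟨b, hbG, hspan, hli⟩ := exists_linearIndependent k G
  have hfin : b.Finite := hli.setFinite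
  have hcard : b.ncard ≤ Module.finrank k (MvPolynomial (Fin N) k ⧸ (I ⊔ ysI k N e)) := by
    have := hfin.fintype
    rw [Set.ncard_eq_toFinset_card', Set.toFinset_card]
    exact hli.fintype_card_le_finrank
  choose g hg using fun x : b => hbG x.2
  have := hfin.fintype
  refine ⟨Finset.univ.image fun x : b => xp e (g x), ?_, ?_⟩
  · refine Finset.card_image_le.trans ?_
    rw [Finset.card_univ, ← Set.toFinset_card, ← Set.ncard_eq_toFinset_card']
    exact hcard
  · set L := Finset.univ.image fun x : b => xp e (g x) with hL
    have hW : Submodule.span k b ≤ (VV k e L).map mk.toLinearMap := by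
      rw [Submodule.span_le]
      intro x hx
      refine ⟨monomial (xp e (g ⟨x, hx⟩)) (1 : k), ?_, hg ⟨x, hx⟩⟩
      refine mem_VV.2 fun m hm => ?_
      have := support_monomial_subset hm
      rw [Finset.mem_singleton] at this
      subst this
      rw [hL, Finset.mem_image]
      refine ⟨⟨x, hx⟩, Finset.mem_univ _, ?_⟩
      ext i
      simp [xp, Finsupp.filter_apply]
      intro h1 h2; omega
    have htop : ∀ f : MvPolynomial (Fin N) k, mk f ∈ Submodule.span k G := by
      intro f
      rw [f.as_sum, map_sum]
      refine Submodule.sum_mem _ fun m _ => ?_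
      have e1 : monomial m (coeff m f) = (coeff m f) • monomial m (1 : k) := by
        rw [smul_monomial]; simp
      rw [e1, map_smul]
      refine Submodule.smul_mem _ _ ?_
      by_cases hy : yp e m = 0
      · have : m = xp e m := by
          conv_lhs => rw [← xp_add_yp e m, hy, add_zero]
        rw [this]
        exact Submodule.subset_span ⟨m, rfl⟩
      · have : mk (monomial m (1 : k)) = 0 := by
          refine Ideal.Quotient.eq_zero_iff_mem.2 (Ideal.mem_sup_right ?_)
          unfold ysI
          rw [mem_ideal_span_X_image]
          intro m' hm'
          have := support_monomial_subset hm'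
          rw [Finset.mem_singleton] at this
          subst this
          obtain ⟨i, hi⟩ := Finsupp.ne_iff.1 hy
          simp only [yp, Finsupp.filter_apply] at hi
          split_ifs at hi with h
          · simp at hi
          · exact ⟨i, by simpa using h, by simpa using hi⟩
        rw [this]; exact Submodule.zero_mem _
    intro f
    have h1 := htop f
    rw [← hspan] at h1
    obtain ⟨v, hv, hvf⟩ := hW h1
    refine ⟨v, hv, ?_⟩
    rw [← Ideal.Quotient.eq_zero_iff_mem, map_sub, sub_eq_zero]
    exact hvf.symm

lemma VV_gen {e : ℕ} {I : Ideal (MvPolynomial (Fin N) k)} (hI : Paper.IdealHomog k I)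
    {L : Finset (Fin N →₀ ℕ)}
    (hL : ∀ f : MvPolynomial (Fin N) k, ∃ v ∈ VV k e L, f - v ∈ I ⊔ ysI k N e) :
    ∀ (d : ℕ) (f : MvPolynomial (Fin N) k), f.IsHomogeneous d → f ∈ VV k e L ⊔ I.restrictScalars k := by
  have hX : ∀ i : Fin N, e ≤ (i : ℕ) → ∀ f ∈ VV k e L ⊔ I.restrictScalars k,
      X i * f ∈ VV k e L ⊔ I.restrictScalars k := by
    intro i hi f hf
    obtain ⟨v, hv, w, hw, rfl⟩ := Submodule.mem_sup.1 hf
    rw [mul_add]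
    exact Submodule.add_mem_sup (VV_X hi hv) (I.mul_mem_left _ hw)
  intro d
  induction d with
  | zero =>
    intro f hf
    obtain ⟨v, hv, hfv⟩ := hL f
    obtain ⟨a, ha, b, hb, hab⟩ := Submodule.mem_sup.1 hfv
    have hb0 : homogeneousComponent 0 b = 0 := by
      have h2 := homog_span_X _ b hb 0
      by_contra h
      obtain ⟨m, hm⟩ := MvPolynomial.ne_zero_iff.1 h
      obtain ⟨i, -, hi⟩ := mem_ideal_span_X_image.1 h2 m (mem_support_iff.2 hm)
      rw [coeff_homogeneousComponent] at hm
      have : m.degree = 0 := by by_contra h; simp [h] at hm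
      rw [Finsupp.degree_eq_zero_iff] at this
      simp [this] at hi
    have e1 : f = homogeneousComponent 0 v + homogeneousComponent 0 a := by
      have := congrArg (homogeneousComponent 0) hab
      rw [map_add, map_sub, hb0, homogeneousComponent_eq_self hf] at this
      rw [← add_zero (homogeneousComponent 0 a), this]; ring
    rw [e1]
    exact Submodule.add_mem_sup (VV_hom 0 hv) (hI a ha 0)
  | succ d ih =>
    intro f hf
    obtain ⟨v, hv, hfv⟩ := hL f
    obtain ⟨a, ha, b, hb, hab⟩ := Submodule.mem_sup.1 hfv
    have e1 : f = homogeneousComponent (d + 1) v + homogeneousComponent (d + 1) a +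
        homogeneousComponent (d + 1) b := by
      have := congrArg (homogeneousComponent (d + 1)) hab
      rw [map_add, map_sub, homogeneousComponent_eq_self hf] at this
      rw [add_assoc, this]; ring
    rw [e1]
    refine Submodule.add_mem _ (Submodule.add_mem_sup (VV_hom _ hv) (hI a ha _)) ?_
    refine span_X_le (homog_span_X _ b hb (d + 1)) _ ?_
    intro j hj m hm
    refine hX j hj _ (ih _ (isHomogeneous_monomial _ ?_))
    have h1 : (Finsupp.single j 1 + m).degree = d + 1 := by
      by_contra h
      exact mem_support_iff.1 hm ((homogeneousComponent_isHomogeneous _ _).coeff_eq_zero h)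
    rw [map_add, Finsupp.degree_single] at h1
    omega

lemma VV_gen' {W : Submodule k (MvPolynomial (Fin N) k)}
    (h : ∀ (d : ℕ) (f : MvPolynomial (Fin N) k), f.IsHomogeneous d → f ∈ W)
    (f : MvPolynomial (Fin N) k) : f ∈ W := by
  rw [← sum_homogeneousComponent f]
  exact W.sum_mem fun d _ => h d _ (homogeneousComponent_isHomogeneous _ _)

lemma VV_reg {e : ℕ} {I : Ideal (MvPolynomial (Fin N) k)} {L : Finset (Fin N →₀ ℕ)}
    (hgen : ∀ f, f ∈ VV k e L ⊔ I.restrictScalars k) (hzero : ∀ f ∈ VV k e L, f ∈ I → f = 0)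
    (t : Set (Fin N)) (ht : ∀ j ∈ t, e ≤ (j : ℕ)) (i : Fin N) (hi : e ≤ (i : ℕ)) (hit : i ∉ t)
    (f : MvPolynomial (Fin N) k) (hf : X i * f ∈ I ⊔ Ideal.span (X '' t)) :
    f ∈ I ⊔ Ideal.span (X '' t) := by
  obtain ⟨v, hv, w, hw, rfl⟩ := Submodule.mem_sup.1 (hgen f)
  have hw' : w ∈ I := hw
  rw [mul_add] at hf
  have h1 : X i * v ∈ I ⊔ Ideal.span (X '' t) := by
    have := Ideal.sub_mem _ hf (Ideal.mem_sup_left (T := Ideal.span (X '' t)) (I.mul_mem_left (X i) hw'))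
    simpa using this
  obtain ⟨a, ha, b, hb, hab⟩ := Submodule.mem_sup.1 h1
  have h2 : b ∈ (VV k e L ⊓ (Ideal.span (X '' t)).restrictScalars k) ⊔ I.restrictScalars k := by
    refine span_X_le hb _ fun j hj m _ => ?_
    obtain ⟨v', hv', w', hw', hvw⟩ := Submodule.mem_sup.1 (hgen (monomial m (1 : k)))
    rw [← hvw, mul_add]
    refine Submodule.add_mem_sup ⟨VV_X (ht j hj) hv', ?_⟩ (I.mul_mem_left _ hw')
    exact Ideal.mul_mem_right _ _ (Ideal.subset_span ⟨j, hj, rfl⟩)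
  obtain ⟨c, hc, g, hg, hcg⟩ := Submodule.mem_sup.1 h2
  have h3 : X i * v - c = 0 := by
    refine hzero _ (Submodule.sub_mem _ (VV_X hi hv) hc.1) ?_
    have : X i * v - c = a + g := by rw [← hab, ← hcg]; ring
    rw [this]; exact I.add_mem ha hg
  have h4 : v ∈ Ideal.span (X '' t) := by
    refine X_mul_mem hit ?_
    rw [sub_eq_zero.1 h3]; exact hc.2
  exact Ideal.add_mem _ (Ideal.mem_sup_right h4) (Ideal.mem_sup_left hw')

end free
end St

namespace St
section vzero
variable {k : Type} [Field k] {N : ℕ}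

lemma finrank_rs (s : Finset (Fin N →₀ ℕ)) :
    Module.finrank k (restrictSupport k (s : Set (Fin N →₀ ℕ))) = s.card := by
  rw [Module.finrank_eq_card_basis (basisRestrictSupport k (s : Set (Fin N →₀ ℕ)))]
  simp

instance rsFin (s : Finset (Fin N →₀ ℕ)) :
    Module.Finite k (restrictSupport k (s : Set (Fin N →₀ ℕ))) :=
  Module.Finite.of_basis (basisRestrictSupport k (s : Set (Fin N →₀ ℕ)))

/-- exponents of degree `j` in the last variables -/
def yset (n e j : ℕ) : Finset (Fin (n + e + 1) →₀ ℕ) :=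
  Finset.finsuppAntidiag (Finset.univ.filter (fun i : Fin (n + e + 1) => e ≤ (i : ℕ))) j

lemma card_yset (n e j : ℕ) : (yset n e j).card = (n + j).choose n := by
  unfold yset
  rw [Finset.card_finsuppAntidiag_nat_eq_choose, card_ys, show n + 1 + j - 1 = n + j by omega,
    Nat.choose_symm_add]

lemma mem_yset {n e j : ℕ} {m : Fin (n + e + 1) →₀ ℕ} :
    m ∈ yset n e j ↔ m.degree = j ∧ ∀ i ∈ m.support, e ≤ (i : ℕ) := by
  unfold yset
  rw [Finset.mem_finsuppAntidiag]
  have h2 : m.support ⊆ Finset.univ.filter (fun i : Fin (n + e + 1) => e ≤ (i : ℕ)) ↔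
      ∀ i ∈ m.support, e ≤ (i : ℕ) := by
    simp [Finset.subset_iff]
  rw [h2]
  refine and_congr_left fun h => ?_
  rw [Finsupp.degree_apply, Finset.sum_subset (h2.2 h)]
  intro i _ hi
  exact Finsupp.notMem_support_iff.1 hi

lemma VV_dim (n e d : ℕ) (L : Finset (Fin (n + e + 1) →₀ ℕ)) :
    Module.finrank k (VV k e L ⊓ homogeneousSubmodule (Fin (n + e + 1)) k d :
      Submodule k (MvPolynomial (Fin (n + e + 1)) k)) ≤ L.card * (n + d).choose n := by
  classical
  let T : Finset (Fin (n + e + 1) →₀ ℕ) :=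
    L.biUnion fun l => (yset n e (d - l.degree)).image fun m => l + m
  have h1 : (VV k e L ⊓ homogeneousSubmodule (Fin (n + e + 1)) k d :
      Submodule k (MvPolynomial (Fin (n + e + 1)) k)) ≤ restrictSupport k (T : Set _) := by
    rintro f ⟨hf, hd⟩
    rw [mem_restrictSupport_iff]
    intro m hm
    have hmd : m.degree = d := by
      by_contra h
      exact mem_support_iff.1 hm (IsHomogeneous.coeff_eq_zero hd h)
    have hx := mem_VV.1 hf m hm
    simp only [T, Finset.coe_biUnion, Set.mem_iUnion]
    refine ⟨xp e m, hx, ?_⟩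
    rw [Finset.mem_coe, Finset.mem_image]
    refine ⟨yp e m, ?_, xp_add_yp e m⟩
    rw [mem_yset]
    constructor
    · have := congrArg Finsupp.degree (xp_add_yp e m)
      rw [map_add] at this
      omega
    · intro i hi
      rw [yp, Finsupp.support_filter, Finset.mem_filter] at hi
      omega
  refine (Submodule.finrank_mono h1).trans ?_
  rw [finrank_rs]
  refine Finset.card_biUnion_le_card_mul _ _ _ fun l _ => ?_
  refine Finset.card_image_le.trans ?_
  rw [card_yset]
  exact Nat.choose_le_choose _ (by omega)

lemma VV_ineq {n e : ℕ} {I : Ideal (MvPolynomial (Fin (n + e + 1)) k)} (hI : Paper.IdealHomog k I)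
    {L : Finset (Fin (n + e + 1) →₀ ℕ)}
    (hgen : ∀ f, f ∈ VV k e L ⊔ I.restrictScalars k)
    {v : MvPolynomial (Fin (n + e + 1)) k} (hv : v ∈ VV k e L) (hvI : v ∈ I) (hv0 : v ≠ 0)
    {c : ℕ} (hvc : v.IsHomogeneous c) (d : ℕ) (hd : c ≤ d) :
    Paper.hilbFn k I d + (n + (d - c)).choose n ≤ L.card * (n + d).choose n := by
  refine le_trans ?_ (VV_dim (k := k) n e d L)
  set W := (VV k e L ⊓ homogeneousSubmodule (Fin (n + e + 1)) k d :
      Submodule k (MvPolynomial (Fin (n + e + 1)) k)) with hW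
  have : Module.Finite k W := Submodule.finiteDimensional_of_le
    (inf_le_right : _ ≤ homogeneousSubmodule (Fin (n + e + 1)) k d)
  let φ := (Ideal.Quotient.mkₐ k I).toLinearMap.domRestrict W
  have h1 := φ.finrank_range_add_finrank_ker
  have h2 : LinearMap.range φ = Paper.quotComponent k I d := by
    rw [LinearMap.range_domRestrict]
    apply le_antisymm
    · exact Submodule.map_mono inf_le_right
    · rintro _ ⟨f, hf, rfl⟩
      obtain ⟨a, ha, b, hb, hab⟩ := Submodule.mem_sup.1 (hgen f)
      refine ⟨homogeneousComponent d a, ⟨VV_hom d ha, homogeneousComponent_isHomogeneous _ _⟩, ?_⟩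
      have h3 : f = homogeneousComponent d a + homogeneousComponent d b := by
        rw [← map_add, hab, homogeneousComponent_eq_self hf]
      have h4 : homogeneousComponent d b ∈ I := hI b hb d
      conv_rhs => rw [h3]
      rw [map_add]
      have h5 : (Ideal.Quotient.mkₐ k I).toLinearMap (homogeneousComponent d b) = 0 :=
        Ideal.Quotient.eq_zero_iff_mem.2 h4
      rw [h5, add_zero]
  rw [h2] at h1
  have h3 : Module.finrank k ((LinearMap.ker φ).map W.subtype) = Module.finrank k (LinearMap.ker φ) :=
    fr_map (Submodule.subtype_injective W) (LinearMap.ker φ)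
  have h4 : (restrictSupport k (yset n e (d - c) : Set (Fin (n + e + 1) →₀ ℕ))).map
      (LinearMap.mulLeft k v) ≤ (LinearMap.ker φ).map W.subtype := by
    rintro _ ⟨g, hg, rfl⟩
    rw [SetLike.mem_coe, mem_restrictSupport_iff] at hg
    have hg' : ∀ m ∈ g.support, m.degree = d - c ∧ ∀ i ∈ m.support, e ≤ (i : ℕ) :=
      fun m hm => mem_yset.1 (hg hm)
    have a1 : v * g ∈ VV k e L := by
      rw [mul_comm]; exact VV_mul hv fun m hm => (hg' m hm).2
    have a2 : (v * g).IsHomogeneous d := by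
      have hgh : g.IsHomogeneous (d - c) := by
        intro m hm
        have := (hg' m (mem_support_iff.2 hm)).1
        rw [← this, Finsupp.degree_eq_weight_one]; rfl
      have := hvc.mul hgh
      rwa [show c + (d - c) = d by omega] at this
    refine ⟨⟨v * g, a1, a2⟩, ?_, rfl⟩
    exact Ideal.Quotient.eq_zero_iff_mem.2 (I.mul_mem_right _ hvI)
  have h5 := Submodule.finrank_mono h4
  rw [fr_map (mul_inj hv0), finrank_rs, card_yset, h3] at h5
  have : Paper.hilbFn k I d = Module.finrank k (Paper.quotComponent k I d) := rfl
  omega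

lemma numeric {n D c : ℕ} (P : Polynomial ℚ) (hP : P.natDegree = n)
    (hD : (D : ℚ) = P.leadingCoeff * (n.factorial : ℚ)) {F : ℕ → ℕ}
    (hF : ∀ᶠ d : ℕ in Filter.atTop, (F d : ℚ) = Polynomial.eval (d : ℚ) P)
    (h : ∀ d ≥ c, F d + (n + (d - c)).choose n ≤ D * (n + d).choose n) : False := by
  set Q : Polynomial ℚ := Polynomial.C (D : ℚ) * Polynomial.preHilbertPoly ℚ n 0 -
    Polynomial.preHilbertPoly ℚ n c - P with hQ
  have hfac : (n.factorial : ℚ) ≠ 0 := by exact_mod_cast n.factorial_ne_zero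
  have hdeg : Q.natDegree ≤ n := by
    refine (Polynomial.natDegree_sub_le _ _).trans (max_le ?_ hP.le)
    refine (Polynomial.natDegree_sub_le _ _).trans (max_le ?_ ?_)
    · refine (Polynomial.natDegree_C_mul_le _ _).trans ?_
      rw [Polynomial.natDegree_preHilbertPoly]
    · rw [Polynomial.natDegree_preHilbertPoly]
  have hcoef : Q.coeff n = - (n.factorial : ℚ)⁻¹ := by
    rw [hQ, Polynomial.coeff_sub, Polynomial.coeff_sub, Polynomial.coeff_C_mul,
      Polynomial.coeff_preHilbertPoly_self, Polynomial.coeff_preHilbertPoly_self, hD,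
      Polynomial.leadingCoeff, hP]
    field_simp
    ring
  have hneg : Q.coeff n < 0 := by
    rw [hcoef]
    have : (0 : ℚ) < n.factorial := by exact_mod_cast n.factorial_pos
    simpa using this
  have hnd : Q.natDegree = n := le_antisymm hdeg (Polynomial.le_natDegree_of_ne_zero hneg.ne)
  have hlc : Q.leadingCoeff < 0 := by rw [Polynomial.leadingCoeff, hnd]; exact hneg
  have hev : ∀ᶠ d : ℕ in Filter.atTop, 0 ≤ Polynomial.eval (d : ℚ) Q := by
    filter_upwards [hF, Filter.eventually_ge_atTop c] with d h1 h2
    rw [hQ, Polynomial.eval_sub, Polynomial.eval_sub, Polynomial.eval_mul, Polynomial.eval_C, ← h1,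
      Polynomial.preHilbertPoly_eq_choose_sub_add ℚ n (Nat.zero_le d),
      Polynomial.preHilbertPoly_eq_choose_sub_add ℚ n h2]
    have := h d h2
    rw [show d - 0 + n = n + d by omega, show d - c + n = n + (d - c) by omega]
    have h3 : (F d : ℚ) + (n + (d - c)).choose n ≤ D * (n + d).choose n := by exact_mod_cast this
    linarith
  have hlt : ∀ᶠ d : ℕ in Filter.atTop, Polynomial.eval (d : ℚ) Q < 0 := by
    rcases Nat.eq_zero_or_pos n with h0 | h0
    · have : Q = Polynomial.C (Q.coeff 0) := Polynomial.eq_C_of_natDegree_eq_zero (by omega)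
      refine Filter.Eventually.of_forall fun d => ?_
      rw [this, Polynomial.eval_C, ← h0]; exact hneg
    · have h1 := Polynomial.tendsto_atBot_of_leadingCoeff_nonpos Q
        (Polynomial.natDegree_pos_iff_degree_pos.1 (by omega)) hlc.le
      exact (h1.comp tendsto_natCast_atTop_atTop).eventually (Filter.eventually_lt_atBot 0)
  obtain ⟨d, h1, h2⟩ := (hev.and hlt).exists
  linarith

lemma finite_K {e : ℕ} {I : Ideal (MvPolynomial (Fin N) k)}
    (hNN : Paper.IsNoetherNormalization k e I) :
    Module.Finite k (MvPolynomial (Fin N) k ⧸ (I ⊔ ysI k N e)) := by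
  have := finite_B hNN
  let π : MvPolynomial (Fin N) k →ₐ[k] ((MvPolynomial (Fin N) k ⧸ I) ⧸ Paper.tailVarsIdeal k e I) :=
    (Ideal.Quotient.mkₐ k _).comp (Ideal.Quotient.mkₐ k I)
  have hk : RingHom.ker π = I ⊔ ysI k N e := by
    ext f
    rw [← mk_mem_tail, RingHom.mem_ker, ← Ideal.Quotient.eq_zero_iff_mem]
    rfl
  have hs : Function.Surjective π := by
    intro b
    obtain ⟨a, rfl⟩ := Ideal.Quotient.mk_surjective b
    obtain ⟨f, rfl⟩ := Ideal.Quotient.mk_surjective a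
    exact ⟨f, rfl⟩
  rw [← hk]
  exact Module.Finite.equiv (Ideal.quotientKerAlgEquivOfSurjective hs).toLinearEquiv.symm

/-- the two generating facts for `V` -/
lemma exists_free {n e : ℕ} {I : Ideal (MvPolynomial (Fin (n + e + 1)) k)}
    (hI : Paper.IdealHomog k I) (hNN : Paper.IsNoetherNormalization k e I)
    (hdeg : Paper.HasDeg k I n (Paper.muS k e I)) :
    ∃ L : Finset (Fin (n + e + 1) →₀ ℕ), (∀ f, f ∈ VV k e L ⊔ I.restrictScalars k) ∧
      ∀ f ∈ VV k e L, f ∈ I → f = 0 := by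
  have hfin : Module.Finite k (MvPolynomial (Fin (n + e + 1)) k ⧸ (I ⊔ ysI k (n + e + 1) e)) := finite_K hNN
  obtain ⟨L, hL, hLg⟩ := exists_L e I
  have hgen := VV_gen' (VV_gen hI hLg)
  refine ⟨L, hgen, fun f hf hfI => ?_⟩
  by_contra hne
  obtain ⟨c, hc⟩ : ∃ c, homogeneousComponent c f ≠ 0 := by
    by_contra h
    push Not at h
    apply hne
    rw [← sum_homogeneousComponent f]
    exact Finset.sum_eq_zero fun i _ => h i
  obtain ⟨P, hP, hD, hF⟩ := hdeg
  refine numeric (c := c) P hP hD hF fun d hd => ?_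
  refine (VV_ineq hI hgen (VV_hom c hf) (hI f hfI c) hc (homogeneousComponent_isHomogeneous _ _) d hd).trans ?_
  rw [mu_eq_finrank]
  exact Nat.mul_le_mul_right _ hL

end vzero
end St

namespace St
section fwd
variable {k : Type} [Field k] {N : ℕ}

/-- the last variables form a regular sequence in any order -/
def YReg (e : ℕ) (I : Ideal (MvPolynomial (Fin N) k)) : Prop :=
  ∀ (t : Set (Fin N)), (∀ j ∈ t, e ≤ (j : ℕ)) → ∀ (i : Fin N), e ≤ (i : ℕ) → i ∉ t →
    ∀ (f : MvPolynomial (Fin N) k), X i * f ∈ I ⊔ Ideal.span (X '' t) → f ∈ I ⊔ Ideal.span (X '' t)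

lemma sup_span_insert (I : Ideal (MvPolynomial (Fin N) k)) (t : Set (Fin N)) (i : Fin N) :
    I ⊔ Ideal.span (X '' t) ⊔ Ideal.span {X i} = I ⊔ Ideal.span (X '' (insert i t)) := by
  rw [sup_assoc, span_X_insert]

lemma YReg_RegL {e : ℕ} {I : Ideal (MvPolynomial (Fin N) k)} (h : YReg e I) (l : List (Fin N)) :
    ∀ (t : Set (Fin N)), (∀ j ∈ t, e ≤ (j : ℕ)) → l.Nodup → (∀ i ∈ l, e ≤ (i : ℕ) ∧ i ∉ t) →
    RegL (I ⊔ Ideal.span (X '' t)) (l.map X) := by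
  induction l with
  | nil => intro t _ _ _; trivial
  | cons i l ih =>
    intro t ht hnd hdis
    rw [List.nodup_cons] at hnd
    have hi := hdis i (by simp)
    refine ⟨isHomogeneous_X _ _, X_ne_zero i, h t ht i hi.1 hi.2, ?_⟩
    rw [sup_span_insert]
    refine ih _ ?_ hnd.2 ?_
    · rintro j (rfl | hj)
      · exact hi.1
      · exact ht j hj
    · intro j hj
      refine ⟨(hdis j (by simp [hj])).1, ?_⟩
      rintro (rfl | hjt)
      · exact hnd.1 hj
      · exact (hdis j (by simp [hj])).2 hjt

lemma YReg_hilb {n e : ℕ} {I : Ideal (MvPolynomial (Fin (n + e + 1)) k)} (hI : Paper.IdealHomog k I)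
    (h : YReg e I) :
    Paper.hilbFn k I = SS^[n + 1] (Paper.hilbFn k (I ⊔ ysI k (n + e + 1) e)) := by
  have h1 := YReg_RegL h (ysL (n + e + 1) e) ∅ (by simp) (nodup_ysL e) (by
    intro i hi; exact ⟨mem_ysL.1 hi, by simp⟩)
  simp only [Set.image_empty, Ideal.span_empty, bot_le, sup_of_le_left] at h1
  have h2 := hilb_list _ I hI h1
  rw [List.length_map, length_ysL] at h2
  rw [h2]
  congr 3
  unfold ysI
  congr 1
  ext; simp [mem_ysL]

lemma YReg_B {e : ℕ} {I : Ideal (MvPolynomial (Fin N) k)} (h : YReg e I) {r : ℕ}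
    (hK : ∀ d ≥ r + 1, ∀ f : MvPolynomial (Fin N) k, f.IsHomogeneous d → f ∈ I ⊔ ysI k N e)
    (xs l : List (Fin N)) :
    ∀ (t : Set (Fin N)), (∀ j ∈ t, e ≤ (j : ℕ)) → l.Nodup → (∀ i ∈ l, e ≤ (i : ℕ) ∧ i ∉ t) →
      (∀ i : Fin N, e ≤ (i : ℕ) → i ∈ t ∨ i ∈ l) →
      B (k := k) (N := N) (hc k N) r (⊤ : Submodule (MvPolynomial (Fin N) k) (MvPolynomial (Fin N) k)) (l ++ xs)
        (I ⊔ Ideal.span (X '' t) : Ideal (MvPolynomial (Fin N) k)) := by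
  induction l with
  | nil =>
    intro t ht _ _ hall
    have : Ideal.span (X '' t) = ysI k N e := by
      unfold ysI; congr 2; ext j
      exact ⟨ht j, fun hj => (hall j hj).resolve_right (by simp)⟩
    rw [this]
    refine B_of_all _ _ _ _ fun d hd m _ hm => ?_
    rcases homog_of_hc hm with rfl | ⟨c, rfl, hmc⟩
    · exact Submodule.zero_mem _
    · exact hK c (by omega) m hmc
  | cons i l ih =>
    intro t ht hnd hdis hall
    rw [List.nodup_cons] at hnd
    have hi := hdis i (by simp)
    refine ⟨fun d _ m _ _ hm => h t ht i hi.1 hi.2 m hm, ?_⟩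
    have h2 : (I ⊔ Ideal.span (X '' t) : Ideal (MvPolynomial (Fin N) k)) ⊔
        (⊤ : Submodule (MvPolynomial (Fin N) k) (MvPolynomial (Fin N) k)).map
          (LinearMap.lsmul (MvPolynomial (Fin N) k) (MvPolynomial (Fin N) k) (X i)) =
        I ⊔ Ideal.span (X '' (insert i t)) := by
      rw [← sup_span_insert]
      congr 1
      ext f
      rw [Ideal.mem_span_singleton']
      constructor
      · rintro ⟨g, -, rfl⟩; exact ⟨g, by simp [mul_comm]⟩
      · rintro ⟨g, rfl⟩; exact ⟨g, trivial, by simp [mul_comm]⟩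
    rw [h2]
    refine ih _ ?_ hnd.2 ?_ ?_
    · rintro j (rfl | hj)
      · exact hi.1
      · exact ht j hj
    · intro j hj
      refine ⟨(hdis j (by simp [hj])).1, ?_⟩
      rintro (rfl | hjt)
      · exact hnd.1 hj
      · exact (hdis j (by simp [hj])).2 hjt
    · intro j hj
      rcases hall j hj with h3 | h3
      · left; right; exact h3
      · rcases List.mem_cons.1 h3 with rfl | h3
        · left; left; rfl
        · right; exact h3

lemma trunc_low {I : Ideal (MvPolynomial (Fin N) k)} {r : ℕ} :
    ∀ f ∈ Paper.truncIdeal k I r, ∀ m ∈ f.support, r + 1 ≤ m.degree := by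
  classical
  intro f hf
  unfold Paper.truncIdeal at hf
  induction hf using Submodule.span_induction with
  | mem x hx =>
    obtain ⟨_, d, hd, hx⟩ := hx
    intro m hm
    have : m.degree = d := by
      by_contra h
      exact mem_support_iff.1 hm (hx.coeff_eq_zero h)
    omega
  | zero => intro m hm; simp at hm
  | add x y _ _ hx hy =>
    intro m hm
    rcases Finset.mem_union.1 (support_add hm) with h | h
    · exact hx m h
    · exact hy m h
  | smul a x _ hx =>
    intro m hm
    obtain ⟨b, _, c, hc, rfl⟩ := Finset.mem_add.1 (support_mul a x hm)
    rw [map_add]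
    have := hx c hc
    omega

lemma YReg_linear {e r : ℕ} {I : Ideal (MvPolynomial (Fin N) k)} (hI : Paper.IdealHomog k I)
    (h : YReg e I)
    (hK : ∀ d ≥ r + 1, ∀ f : MvPolynomial (Fin N) k, f.IsHomogeneous d → f ∈ I ⊔ ysI k N e)
    (res : Paper.MinGradedFreeRes k (Fin N) ↥(Paper.truncIdeal k I r)
      (Paper.idealDeg k (Paper.truncIdeal k I r))) :
    ∀ (i : ℕ) (j : ℤ), res.β i j ≠ 0 → j = r + 1 := by
  have hnd : (ysL N e ++ xsL N e).Nodup := by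
    refine (nodup_ysL e).append (nodup_xsL e) ?_
    intro i h1 h2
    rw [mem_ysL] at h1
    rw [mem_xsL] at h2
    omega
  have hall : ∀ i : Fin N, i ∈ ysL N e ++ xsL N e := by
    intro i
    rw [List.mem_append, mem_ysL, mem_xsL]; omega
  have hB1 : B (k := k) (N := N) (hc k N) r (⊤ : Submodule (MvPolynomial (Fin N) k) (MvPolynomial (Fin N) k))
      (ysL N e ++ xsL N e) I := by
    have := YReg_B h hK (xsL N e) (ysL N e) ∅ (by simp) (nodup_ysL e)
      (fun i hi => ⟨mem_ysL.1 hi, by simp⟩) (fun i hi => Or.inr (mem_ysL.2 hi))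
    simpa using this
  have hB0 : B (k := k) (N := N) (hc k N) (r + 1) (⊤ : Submodule (MvPolynomial (Fin N) k) (MvPolynomial (Fin N) k))
      (ysL N e ++ xsL N e) ⊥ := by
    have := B_poly (k := k) ((r : ℤ) + 1) (by omega) (ysL N e ++ xsL N e) ∅ hnd (by simp)
      (fun i => Or.inr (hall i))
    simpa using this
  have hB2 : B (k := k) (N := N) (hc k N) (r + 1) I (ysL N e ++ xsL N e) ⊥ := by
    refine B_ker gr_poly r LinearMap.id (p' := hc k N) (fun _ _ => rfl) I ⊤
      (fun d m hm => homog_hc hI d hm) (fun _ => trivial) (fun v _ => ⟨v, rfl⟩)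
      _ ⊥ ⊥ I ?_ le_rfl ?_ (fun m hm => hm) ?_ (fun _ _ _ _ _ h => h) hB0 hB1
    · intro d m hm
      rw [Submodule.mem_bot] at hm ⊢; rw [hm, map_zero]
    · intro m hm
      rw [Submodule.mem_bot] at hm; rw [hm]; exact Submodule.zero_mem _
    · intro g hg; exact ⟨g, hg, by simp⟩
  refine linear_res _ r _ hnd hall ?_ ?_ res
  · refine B_trunc gr_poly (r + 1) (Paper.truncIdeal k I r) I ?_ (fun d m hm => homog_hc hI d hm) ?_
      _ ⊥ ⊥ ?_ le_rfl (fun _ _ _ _ _ h => h) hB2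
    · unfold Paper.truncIdeal
      rw [Ideal.span_le]
      intro f hf; exact hf.1
    · intro d hd m hm hmd
      rcases homog_of_hc hmd with rfl | ⟨c, rfl, hmc⟩
      · exact Submodule.zero_mem _
      · exact Ideal.subset_span ⟨hm, c, by omega, hmc⟩
    · intro d m hm
      rw [Submodule.mem_bot] at hm ⊢; rw [hm, map_zero]
  · intro f hf d hfd hd
    by_contra hne
    obtain ⟨m, hm⟩ := MvPolynomial.ne_zero_iff.1 hne
    have h1 := trunc_low f hf m (mem_support_iff.2 hm)
    have h2 : m.degree = d := by
      by_contra h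
      exact hm (hfd.coeff_eq_zero h)
    omega

lemma mk_mem_map {I J : Ideal (MvPolynomial (Fin N) k)} {f : MvPolynomial (Fin N) k} :
    Ideal.Quotient.mk I f ∈ J.map (Ideal.Quotient.mk I) ↔ f ∈ I ⊔ J := by
  rw [← Ideal.mem_comap, Ideal.comap_map_of_surjective _ Ideal.Quotient.mk_surjective,
    sup_comm, ← RingHom.ker_eq_comap_bot, Ideal.mk_ker]

lemma ofList_mk (I : Ideal (MvPolynomial (Fin N) k)) (l : List (Fin N)) :
    Ideal.ofList (l.map fun i => Ideal.Quotient.mk I (X i)) =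
      (Ideal.span (X '' {i | i ∈ l})).map (Ideal.Quotient.mk I) := by
  rw [Ideal.map_span, Ideal.ofList]
  congr 1
  ext y; simp

lemma YReg_CM {n e : ℕ} {I : Ideal (MvPolynomial (Fin (n + e + 1)) k)}
    (h : YReg e I) (hne : I ⊔ ysI k (n + e + 1) e ≠ ⊤) : Paper.IsCMQuot k I (n + 1) := by
  refine ⟨(ysL (n + e + 1) e).map fun i => Ideal.Quotient.mk I (X i), ?_, ?_, ?_, ?_⟩
  · rw [List.length_map, length_ysL]
  · intro x hx
    obtain ⟨i, _, rfl⟩ := List.mem_map.1 hx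
    exact Ideal.subset_span ⟨i, rfl⟩
  · constructor
    intro i hi
    rw [isSMulRegular_quotient_iff_mem_of_smul_mem]
    intro x hx
    rw [smul_eq_mul, Ideal.mul_top] at hx ⊢
    rw [← List.map_take, ofList_mk] at hx ⊢
    obtain ⟨f, rfl⟩ := Ideal.Quotient.mk_surjective x
    rw [List.getElem_map, smul_eq_mul, ← map_mul, mk_mem_map] at hx
    rw [mk_mem_map]
    rw [List.length_map] at hi
    refine h _ ?_ _ ?_ ?_ f hx
    · intro j hj; exact mem_ysL.1 (List.mem_of_mem_take hj)
    · exact mem_ysL.1 (List.getElem_mem hi)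
    · intro hmem
      obtain ⟨j, hj, hji⟩ := List.mem_iff_getElem.1 hmem
      rw [List.getElem_take] at hji
      have h1 := (nodup_ysL (N := n + e + 1) e).getElem_inj_iff.1 hji
      rw [List.length_take] at hj
      omega
  · rw [smul_eq_mul, Ideal.mul_top, ofList_mk]
    intro htop
    apply hne
    rw [Ideal.eq_top_iff_one]
    have : Ideal.Quotient.mk I (1 : MvPolynomial (Fin (n + e + 1)) k) ∈
      (Ideal.span (X '' {i | i ∈ ysL (n + e + 1) e})).map (Ideal.Quotient.mk I) := by
      rw [← htop]; trivial
    rw [mk_mem_map] at this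
    simpa [mem_ysL, ysI] using this

lemma nat_arg {g h : ℕ → ℕ} (hle : ∀ d, g d ≤ h d) (hstep : ∀ d, g d < h d → g (d + 1) < h (d + 1))
    {r : ℕ} (hs : ∑ d ∈ Finset.range (r + 1), h d = ∑ d ∈ Finset.range (r + 1), g d + 1) :
    (∀ d < r, g d = h d) ∧ h r = g r + 1 := by
  have h1 : ∀ d, g d < h d → ∀ j, g (d + j) < h (d + j) := by
    intro d hd j
    induction j with
    | zero => exact hd
    | succ j ih => exact hstep _ ih
  rw [Finset.sum_range_succ, Finset.sum_range_succ] at hs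
  have h2 : ∀ d < r, g d = h d := by
    intro d hd
    by_contra hne
    have h3 : g d < h d := lt_of_le_of_ne (hle d) hne
    have h4 := h1 d h3 (r - d)
    rw [show d + (r - d) = r by omega] at h4
    have h5 : ∑ d ∈ Finset.range r, g d < ∑ d ∈ Finset.range r, h d :=
      Finset.sum_lt_sum (fun i _ => hle i) ⟨d, Finset.mem_range.2 hd, h3⟩
    omega
  refine ⟨h2, ?_⟩
  have : ∑ d ∈ Finset.range r, g d = ∑ d ∈ Finset.range r, h d :=
    Finset.sum_congr rfl fun d hd => h2 d (Finset.mem_range.1 hd)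
  omega

lemma step_lt {e : ℕ} (he : 0 < e) {K : Ideal (MvPolynomial (Fin (N + 1)) k)}
    (hle : ysI k (N + 1) e ≤ K) (d : ℕ)
    (h : Paper.hilbFn k K d < Paper.hilbFn k (ysI k (N + 1) e) d) :
    Paper.hilbFn k K (d + 1) < Paper.hilbFn k (ysI k (N + 1) e) (d + 1) := by
  have a1 := hilb_add K d
  have a2 := hilb_add (ysI k (N + 1) e) d
  have a3 := hilb_add K (d + 1)
  have a4 := hilb_add (ysI k (N + 1) e) (d + 1)
  have h1 : ¬ Ig K d ≤ Ig (ysI k (N + 1) e) d := by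
    intro hle
    have := Submodule.finrank_mono hle
    omega
  obtain ⟨f, hf, hf'⟩ := SetLike.not_le_iff_exists.1 h1
  have h2 : Ig (ysI k (N + 1) e) (d + 1) < Ig K (d + 1) := by
    refine lt_of_le_of_ne (inf_le_inf_left _ hle) fun heq => ?_
    have h3 : X 0 * f ∈ Ig K (d + 1) := by
      refine ⟨?_, K.mul_mem_left _ hf.2⟩
      have := (isHomogeneous_X k (0 : Fin (N + 1))).mul hf.1
      rwa [add_comm 1 d] at this
    rw [← heq] at h3
    refine hf' ⟨hf.1, X_mul_mem (i := 0) ?_ h3.2⟩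
    simp; omega
  have := Submodule.finrank_lt_finrank_of_lt h2
  omega

lemma hilb_botr (d : ℕ) : Paper.hilbFn k (⊥ : Ideal (MvPolynomial (Fin N) k)) d =
    Module.finrank k (homogeneousSubmodule (Fin N) k d) := by
  have := hilb_add (⊥ : Ideal (MvPolynomial (Fin N) k)) d
  have h1 : Ig (⊥ : Ideal (MvPolynomial (Fin N) k)) d = ⊥ := by
    rw [eq_bot_iff]; intro f hf; exact hf.2
  rw [h1, finrank_bot] at this
  omega

lemma YReg_dim {n e r : ℕ} (he : 0 < e) {I : Ideal (MvPolynomial (Fin (n + e + 1)) k)}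
    (hI : Paper.IdealHomog k I) (h : YReg e I)
    (hK : ∀ d ≥ r + 1, ∀ f : MvPolynomial (Fin (n + e + 1)) k, f.IsHomogeneous d →
      f ∈ I ⊔ ysI k (n + e + 1) e)
    (hmu : Paper.muS k e I + 1 = (e + r).choose r) : Module.finrank k (Ig I r) = 1 := by
  rw [mu_eq hI hK, ← sum_hilb_ysI (k := k) (N := n + e + 1) e r he (by omega)] at hmu
  obtain ⟨h1, h2⟩ := nat_arg (fun d => hilb_anti (le_sup_right : ysI k (n + e + 1) e ≤ I ⊔ ysI k (n + e + 1) e) d)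
    (step_lt he le_sup_right) hmu.symm
  have h3 := congrFun (YReg_hilb hI h) r
  have h4 := congrFun (hilb_bot (k := k) n e) r
  rw [SS_formula, Finset.sum_range_succ] at h3 h4
  rw [h2] at h4
  have h5 : ∑ x ∈ Finset.range r, Paper.hilbFn k (I ⊔ ysI k (n + e + 1) e) x * (n + (r - x)).choose n =
      ∑ x ∈ Finset.range r, Paper.hilbFn k (ysI k (n + e + 1) e) x * (n + (r - x)).choose n :=
    Finset.sum_congr rfl fun d hd => by rw [h1 d (Finset.mem_range.1 hd)]
  rw [h5] at h3
  simp only [Nat.sub_self, add_zero, Nat.choose_self, mul_one] at h3 h4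
  rw [hilb_botr] at h4
  have := hilb_add I r
  omega

theorem forward {n e r : ℕ} (he : 0 < e) {I : Ideal (MvPolynomial (Fin (n + e + 1)) k)}
    (hI : Paper.IdealHomog k I) (hNN : Paper.IsNoetherNormalization k e I)
    (hr : Paper.reductionNumber k e I = r)
    (h1 : Paper.HasDeg k I n ((e + r).choose r - 1))
    (h2 : Paper.muS k e I = (e + r).choose r - 1) :
    Paper.IsCMQuot k I (n + 1) ∧
        Module.finrank k ↥(Paper.idealDeg k I (r : ℤ)) = 1 ∧
        ∃ d0 : ℤ, ∀ res : Paper.MinGradedFreeRes k (Fin (n + e + 1))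
            ↥(Paper.truncIdeal k I r) (Paper.idealDeg k (Paper.truncIdeal k I r)),
          ∀ (i : ℕ) (j : ℤ), res.β i j ≠ 0 → j = d0 := by
  obtain ⟨hr0, hK⟩ := red_spec hI hNN hr
  have hbig : 2 ≤ (e + r).choose r := by
    have h3 : (e + r).choose r ≥ (1 + r).choose r := Nat.choose_le_choose _ (by omega)
    rw [add_comm 1 r, Nat.choose_succ_self_right] at h3
    omega
  rw [← h2] at h1
  obtain ⟨L, hgen, hzero⟩ := exists_free hI hNN h1
  have hY : YReg e I := fun t ht i hi hit f hf => VV_reg hgen hzero t ht i hi hit f hf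
  refine ⟨YReg_CM hY ?_, ?_, r + 1, fun res => YReg_linear hI hY hK res⟩
  · intro htop
    rw [mu_eq_finrank, htop] at h2
    have : Module.finrank k (MvPolynomial (Fin (n + e + 1)) k ⧸ (⊤ : Ideal (MvPolynomial (Fin (n + e + 1)) k))) = 0 :=
      Module.finrank_zero_of_subsingleton
    omega
  · rw [finrank_idealDeg]
    exact YReg_dim he hI hY hK (by omega)

end fwd
end St

namespace St
section depth
variable {A : Type} [CommRing A]

/-- `f` is a nonzerodivisor modulo `J` -/
def Reg (J : Ideal A) (f : A) : Prop := ∀ g, f * g ∈ J → g ∈ J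

/-- there is a weakly regular sequence of length `c` in `𝔪` modulo `J` -/
def DD (m : Ideal A) : ℕ → Ideal A → Prop
  | 0, _ => True
  | c + 1, J => ∃ f ∈ m, Reg J f ∧ DD m c (J ⊔ Ideal.span {f})

lemma ass_spec [IsNoetherianRing A] (J : Ideal A) :
    ∃ S : Set (Ideal A), S.Finite ∧ (∀ P ∈ S, P.IsPrime ∧ J ≤ P ∧ ∃ m ∉ J, ∀ a ∈ P, a * m ∈ J) ∧
      ∀ a, (∀ P ∈ S, a ∉ P) → Reg J a := by
  refine ⟨associatedPrimes A (A ⧸ J), associatedPrimes.finite A (A ⧸ J), ?_, ?_⟩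
  · intro P hP
    rw [AssociatedPrimes.mem_iff, isAssociatedPrime_iff] at hP
    obtain ⟨hp, x, hx⟩ := hP
    obtain ⟨m, rfl⟩ := Ideal.Quotient.mk_surjective x
    have key : ∀ a, a ∈ P ↔ a * m ∈ J := by
      intro a
      rw [hx, Submodule.mem_colon_singleton, Submodule.mem_bot, ← Ideal.Quotient.eq_zero_iff_mem, map_mul]
      rfl
    refine ⟨hp, ?_, m, ?_, fun a ha => (key a).1 ha⟩
    · intro a ha; exact (key a).2 (J.mul_mem_right _ ha)
    · intro hm
      apply hp.ne_top
      rw [Ideal.eq_top_iff_one, key, one_mul]; exact hm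
  · intro a ha g hg
    by_contra hgJ
    have : a ∈ ⋃ p ∈ associatedPrimes A (A ⧸ J), (p : Set A) := by
      rw [biUnion_associatedPrimes_eq_zero_divisors]
      refine ⟨Ideal.Quotient.mk J g, ?_, ?_⟩
      · rwa [Ne, Ideal.Quotient.eq_zero_iff_mem]
      · have : a • Ideal.Quotient.mk J g = Ideal.Quotient.mk J (a * g) := by rw [map_mul]; rfl
        rw [this, Ideal.Quotient.eq_zero_iff_mem]; exact hg
    simp only [Set.mem_iUnion] at this
    obtain ⟨P, hP, haP⟩ := this
    exact ha P hP haP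

lemma avoid2 [IsNoetherianRing A] (m J J' : Ideal A)
    (h : ∀ x, (∀ a ∈ m, a * x ∈ J) → x ∈ J) (h' : ∀ x, (∀ a ∈ m, a * x ∈ J') → x ∈ J') :
    ∃ z ∈ m, Reg J z ∧ Reg J' z := by
  obtain ⟨S, hSf, hS, hR⟩ := ass_spec J
  obtain ⟨S', hSf', hS', hR'⟩ := ass_spec J'
  have hprime : ∀ P ∈ S ∪ S', P.IsPrime := by
    rintro P (hP | hP)
    · exact (hS P hP).1
    · exact (hS' P hP).1
  have : ¬ (m : Set A) ⊆ ⋃ P ∈ S ∪ S', (P : Set A) := by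
    intro hsub
    obtain ⟨P, hP, hle⟩ := (Ideal.subset_union_prime_finite (hSf.union hSf') (f := id) ⊥ ⊥
      (fun P hP _ _ => hprime P hP)).1 hsub
    rcases hP with hP | hP
    · obtain ⟨x, hx, hx'⟩ := (hS P hP).2.2
      exact hx (h x fun a ha => hx' a (hle ha))
    · obtain ⟨x, hx, hx'⟩ := (hS' P hP).2.2
      exact hx (h' x fun a ha => hx' a (hle ha))
  obtain ⟨z, hz, hzn⟩ := Set.not_subset.1 this
  simp only [Set.mem_iUnion, not_exists] at hzn
  exact ⟨z, hz, hR z fun P hP => hzn P (Or.inl hP), hR' z fun P hP => hzn P (Or.inr hP)⟩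

lemma mem_sup_single {J : Ideal A} {y x : A} : x ∈ J ⊔ Ideal.span {y} ↔ ∃ b, x - y * b ∈ J := by
  rw [Submodule.mem_sup]
  constructor
  · rintro ⟨j, hj, w, hw, rfl⟩
    obtain ⟨b, rfl⟩ := Ideal.mem_span_singleton'.1 hw
    exact ⟨b, by convert hj using 1; ring⟩
  · rintro ⟨b, hb⟩
    exact ⟨_, hb, y * b, Ideal.mem_span_singleton'.2 ⟨b, mul_comm _ _⟩, by ring⟩

lemma reg_swap {J : Ideal A} {f z : A} (hf : Reg J f) (hz : Reg (J ⊔ Ideal.span {f}) z) :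
    Reg (J ⊔ Ideal.span {z}) f := by
  intro g hg
  obtain ⟨h, hh⟩ := mem_sup_single.1 hg
  have h1 : z * h ∈ J ⊔ Ideal.span {f} := by
    refine mem_sup_single.2 ⟨g, ?_⟩
    rw [← neg_mem_iff]; convert hh using 1; ring
  obtain ⟨h', hh'⟩ := mem_sup_single.1 (hz h h1)
  refine mem_sup_single.2 ⟨h', hf _ ?_⟩
  have := J.add_mem hh (J.mul_mem_left z hh')
  convert this using 1; ring

lemma exchange [IsNoetherianRing A] (m : Ideal A) (c : ℕ) :
    ∀ (J : Ideal A) (y : A), DD m (c + 1) J → y ∈ m → Reg J y → DD m c (J ⊔ Ideal.span {y}) := by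
  induction c with
  | zero => intro J y _ _ _; trivial
  | succ c ih =>
    intro J y hD hym hy
    obtain ⟨f1, hf1m, hf1, hD1⟩ := hD
    obtain ⟨f2, hf2m, hf2, hD2⟩ := id hD1
    have hs : ∀ x, (∀ a ∈ m, a * x ∈ J ⊔ Ideal.span {y}) → x ∈ J ⊔ Ideal.span {y} := by
      intro x hx
      obtain ⟨x', hx'⟩ := mem_sup_single.1 (hx f1 hf1m)
      have h1 : f2 * x' ∈ J ⊔ Ideal.span {f1} := by
        obtain ⟨b, hb⟩ := mem_sup_single.1 (hx f2 hf2m)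
        refine mem_sup_single.2 ⟨b, hy _ ?_⟩
        have := J.sub_mem (J.mul_mem_left f1 hb) (J.mul_mem_left f2 hx')
        convert this using 1; ring
      obtain ⟨x2, hx2⟩ := mem_sup_single.1 (hf2 _ h1)
      refine mem_sup_single.2 ⟨x2, hf1 _ ?_⟩
      have := J.add_mem hx' (J.mul_mem_left y hx2)
      convert this using 1; ring
    obtain ⟨z, hzm, hz1, hzy⟩ := avoid2 m (J ⊔ Ideal.span {f1}) (J ⊔ Ideal.span {y})
      (fun x hx => hf2 x (hx f2 hf2m)) hs
    have h1 : DD m (c + 1) (J ⊔ Ideal.span {z}) := by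
      refine ⟨f1, hf1m, reg_swap hf1 hz1, ?_⟩
      rw [sup_right_comm]
      exact ih _ z hD1 hzm hz1
    refine ⟨z, hzm, hzy, ?_⟩
    rw [sup_right_comm]
    exact ih _ y h1 hym (reg_swap hy hzy)

lemma DD_of_list (m : Ideal A) (fs : List A) : ∀ (J : Ideal A), (∀ f ∈ fs, f ∈ m) →
    (∀ i (hi : i < fs.length), Reg (J ⊔ Ideal.ofList (fs.take i)) fs[i]) → DD m fs.length J := by
  induction fs with
  | nil => intro J _ _; trivial
  | cons f fs ih =>
    intro J hm h
    refine ⟨f, hm f (by simp), ?_, ih _ (fun g hg => hm g (by simp [hg])) ?_⟩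
    · have := h 0 (by simp)
      simpa using this
    · intro i hi
      have := h (i + 1) (by simpa using hi)
      simpa [Ideal.ofList_cons, sup_assoc] using this

end depth

section bwd
variable {k : Type} [Field k] {N : ℕ}

lemma le_max {I : Ideal (MvPolynomial (Fin N) k)} (hI : Paper.IdealHomog k I) (hne : I ≠ ⊤) :
    I ≤ Ideal.span (Set.range X) := by
  intro f hf
  rw [← Set.image_univ, mem_ideal_span_X_image]
  intro m hm
  by_contra h
  push Not at h
  have hm0 : m = 0 := by ext i; exact h i trivial
  subst hm0
  apply hne
  have h1 := hI f hf 0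
  rw [homogeneousComponent_zero] at h1
  have h2 := I.mul_mem_left (C (coeff 0 f)⁻¹) h1
  rw [← C_mul, inv_mul_cancel₀ (mem_support_iff.1 hm), C_1] at h2
  exact (Ideal.eq_top_iff_one _).2 h2

lemma CM_DD {I : Ideal (MvPolynomial (Fin N) k)} (hI : Paper.IdealHomog k I) (hne : I ≠ ⊤) {c : ℕ}
    (h : Paper.IsCMQuot k I c) : DD (Ideal.span (Set.range X)) c I := by
  obtain ⟨rs, hlen, hmem, hreg⟩ := h
  obtain ⟨fs, rfl⟩ : ∃ fs : List (MvPolynomial (Fin N) k), fs.map (Ideal.Quotient.mk I) = rs :=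
    List.map_surjective_iff.2 Ideal.Quotient.mk_surjective rs
  rw [List.length_map] at hlen
  rw [← hlen]
  refine DD_of_list _ fs I ?_ ?_
  · intro f hf
    have h1 := hmem _ (List.mem_map_of_mem hf)
    have h2 : Paper.irrelevantIdeal k I = (Ideal.span (Set.range X)).map (Ideal.Quotient.mk I) := by
      rw [Ideal.map_span, ← Set.range_comp]; rfl
    rw [h2, mk_mem_map, sup_eq_right.2 (le_max hI hne)] at h1
    exact h1
  · intro i hi g hg
    have h1 := hreg.toIsWeaklyRegular.regular_mod_prev i (by simpa using hi)
    rw [isSMulRegular_quotient_iff_mem_of_smul_mem] at h1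
    have h2 := h1 (Ideal.Quotient.mk I g)
    rw [smul_eq_mul, Ideal.mul_top, List.getElem_map, smul_eq_mul, ← map_mul, ← List.map_take,
      ← Ideal.map_ofList, mk_mem_map, mk_mem_map] at h2
    exact h2 hg

/-- span of the last variables -/
noncomputable def YV (k : Type) [Field k] (N e : ℕ) : Submodule k (MvPolynomial (Fin N) k) :=
  Submodule.span k (X '' {i : Fin N | e ≤ (i : ℕ)})

lemma exists_lin [Infinite k] {e : ℕ} {I J : Ideal (MvPolynomial (Fin N) k)}
    (hX : ∀ i : Fin N, ∃ m : ℕ, (X i : MvPolynomial (Fin N) k) ^ m ∈ I ⊔ ysI k N e)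
    (hIJ : I ≤ J) {c : ℕ} (hD : DD (Ideal.span (Set.range X)) (c + 1) J) :
    ∃ l ∈ YV k N e, Reg J l := by
  classical
  obtain ⟨f, hfm, hf, -⟩ := hD
  obtain ⟨S, hSf, hS, hR⟩ := ass_spec J
  let T : Finset (Submodule k (YV k N e)) :=
    hSf.toFinset.image fun P => (P.restrictScalars k).comap (YV k N e).subtype
  have hT : ⊤ ∉ T := by
    intro hT
    obtain ⟨P, hP, htop⟩ := Finset.mem_image.1 hT
    obtain ⟨hp, hJP, m, hm, hmP⟩ := hS P (hSf.mem_toFinset.1 hP)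
    have h1 : ysI k N e ≤ P := by
      unfold ysI
      rw [Ideal.span_le]
      intro x hx
      have : (⟨x, Submodule.subset_span hx⟩ : YV k N e) ∈
        (P.restrictScalars k).comap (YV k N e).subtype := by rw [htop]; trivial
      exact this
    have h2 : Ideal.span (Set.range X) ≤ P := by
      rw [Ideal.span_le]
      rintro _ ⟨i, rfl⟩
      obtain ⟨a, ha⟩ := hX i
      exact hp.mem_of_pow_mem _ (sup_le (hIJ.trans hJP) h1 ha)
    exact hm (hf m (hmP f (h2 hfm)))
  have h1 := Subspace.biUnion_ne_univ_of_top_notMem hT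
  obtain ⟨l, hl⟩ := (Set.ne_univ_iff_exists_notMem _).1 h1
  refine ⟨l.1, l.2, hR _ fun P hP hlP => hl ?_⟩
  simp only [Set.mem_iUnion]
  exact ⟨_, Finset.mem_image.2 ⟨P, hSf.mem_toFinset.2 hP, rfl⟩, hlP⟩

lemma YV_hom {e : ℕ} {l : MvPolynomial (Fin N) k} (hl : l ∈ YV k N e) : l.IsHomogeneous 1 := by
  have : YV k N e ≤ homogeneousSubmodule (Fin N) k 1 := by
    unfold YV
    rw [Submodule.span_le]
    rintro _ ⟨i, _, rfl⟩
    exact isHomogeneous_X _ _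
  exact this hl

lemma YV_ysI {e : ℕ} {l : MvPolynomial (Fin N) k} (hl : l ∈ YV k N e) : l ∈ ysI k N e := by
  have : YV k N e ≤ (ysI k N e).restrictScalars k := by
    unfold YV
    rw [Submodule.span_le]
    exact Ideal.subset_span
  exact this hl

instance YVfin (e : ℕ) : Module.Finite k (YV k N e) :=
  FiniteDimensional.span_of_finite k (Set.toFinite _)

lemma exists_list [Infinite k] {e : ℕ} {I : Ideal (MvPolynomial (Fin N) k)}
    (hX : ∀ i : Fin N, ∃ m : ℕ, (X i : MvPolynomial (Fin N) k) ^ m ∈ I ⊔ ysI k N e) (c : ℕ) :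
    ∀ (J : Ideal (MvPolynomial (Fin N) k)) (U : Submodule k (MvPolynomial (Fin N) k)),
    I ≤ J → J ≤ Ideal.span (Set.range X) → U ≤ YV k N e → U ≤ J.restrictScalars k →
    DD (Ideal.span (Set.range X)) c J →
    ∃ (ls : List (MvPolynomial (Fin N) k)) (U' : Submodule k (MvPolynomial (Fin N) k)),
      ls.length = c ∧ RegL J ls ∧ (∀ l ∈ ls, l ∈ YV k N e) ∧ U' ≤ YV k N e ∧
      Module.finrank k U' = Module.finrank k U + c ∧
      U' ≤ (J ⊔ Ideal.span {z | z ∈ ls}).restrictScalars k := by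
  induction c with
  | zero =>
    intro J U _ _ hU hUJ _
    exact ⟨[], U, rfl, trivial, by simp, hU, rfl, fun x hx => Ideal.mem_sup_left (hUJ hx)⟩
  | succ c ih =>
    intro J U hIJ hJm hU hUJ hD
    obtain ⟨l, hl, hreg⟩ := exists_lin hX hIJ hD
    have hlm : l ∈ Ideal.span (Set.range X) := by
      have := YV_ysI hl
      exact Ideal.span_mono (Set.image_subset_range _ _) this
    have hlJ : l ∉ J := by
      intro h
      have := hJm (hreg 1 (by simpa using h))
      rw [← Set.image_univ] at this
      exact one_notMem_max this
    obtain ⟨ls, U', h1, h2, h3, h4, h5, h6⟩ := ih (J ⊔ Ideal.span {l}) (U ⊔ Submodule.span k {l})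
      (hIJ.trans le_sup_left) (sup_le hJm ((Ideal.span_singleton_le_iff_mem _).2 hlm))
      (sup_le hU (by rw [Submodule.span_singleton_le_iff_mem]; exact hl))
      (sup_le (fun x hx => Ideal.mem_sup_left (hUJ hx)) (by
        rw [Submodule.span_singleton_le_iff_mem]
        exact Ideal.mem_sup_right (Ideal.mem_span_singleton_self l)))
      (exchange _ c J l hD hlm hreg)
    refine ⟨l :: ls, U', by simp [h1], ⟨YV_hom hl, ?_, hreg, h2⟩, ?_, h4, ?_, ?_⟩
    · rintro rfl; exact hlJ (J.zero_mem)
    · intro x hx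
      rcases List.mem_cons.1 hx with rfl | hx
      · exact hl
      · exact h3 x hx
    · rw [h5]
      have : Module.Finite k U := Submodule.finiteDimensional_of_le hU
      have hlU : l ∉ U := fun h => hlJ (hUJ h)
      have hfr : Module.finrank k (U ⊔ Submodule.span k {l} : Submodule k (MvPolynomial (Fin N) k)) =
          Module.finrank k U + 1 := by
        have a1 := Submodule.finrank_sup_add_finrank_inf_eq U (Submodule.span k {l})
        have a2 : U ⊓ Submodule.span k {l} = ⊥ := by
          rw [← disjoint_iff]
          exact Submodule.disjoint_span_singleton_of_notMem hlU
        have hl0 : l ≠ 0 := by rintro rfl; exact hlJ J.zero_mem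
        rw [a2, finrank_bot, finrank_span_singleton hl0] at a1
        omega
      rw [hfr]; ring
    · have : J ⊔ Ideal.span {z | z ∈ l :: ls} = J ⊔ Ideal.span {l} ⊔ Ideal.span {z | z ∈ ls} := by
        rw [sup_assoc, ← Ideal.span_union]
        congr 2
        ext; simp
      rw [this]; exact h6

lemma CM_hilb [Infinite k] {n e : ℕ} {I : Ideal (MvPolynomial (Fin (n + e + 1)) k)}
    (hI : Paper.IdealHomog k I) (hne : I ≠ ⊤)
    (hNN : Paper.IsNoetherNormalization k e I) (hCM : Paper.IsCMQuot k I (n + 1)) :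
    Paper.hilbFn k I = SS^[n + 1] (Paper.hilbFn k (I ⊔ ysI k (n + e + 1) e)) := by
  classical
  obtain ⟨ls, U', h1, h2, h3, h4, h5, h6⟩ := exists_list (X_pow_mem hI hNN) (n + 1) I ⊥ le_rfl
    (le_max hI hne) bot_le bot_le (CM_DD hI hne hCM)
  rw [finrank_bot, zero_add] at h5
  have h7 : Module.finrank k (YV k (n + e + 1) e) ≤ n + 1 := by
    have := finrank_span_finset_le_card (R := k)
      ((Finset.univ.filter (fun i : Fin (n + e + 1) => e ≤ (i : ℕ))).image
        (X : Fin (n + e + 1) → MvPolynomial (Fin (n + e + 1)) k))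
    have h8 := this.trans Finset.card_image_le
    rw [card_ys] at h8
    have e1 : (X '' {i : Fin (n + e + 1) | e ≤ (i : ℕ)} : Set (MvPolynomial (Fin (n + e + 1)) k))
        = ↑((Finset.univ.filter (fun i : Fin (n + e + 1) => e ≤ (i : ℕ))).image
        (X : Fin (n + e + 1) → MvPolynomial (Fin (n + e + 1)) k)) := by
      ext; simp
    unfold YV
    rw [e1]
    exact h8
  have h8 : U' = YV k (n + e + 1) e := Submodule.eq_of_le_of_finrank_le h4 (by omega)
  have h9 : I ⊔ Ideal.span {z | z ∈ ls} = I ⊔ ysI k (n + e + 1) e := by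
    apply le_antisymm
    · refine sup_le_sup_left ?_ _
      rw [Ideal.span_le]
      intro z hz; exact YV_ysI (h3 z hz)
    · refine sup_le le_sup_left ?_
      conv_lhs => unfold ysI
      rw [Ideal.span_le]
      intro x hx
      apply h6
      rw [h8]
      exact Submodule.subset_span hx
  rw [← h9, ← h1]
  exact hilb_list ls I hI h2

lemma low_zero {M r : ℕ} {I : Ideal (MvPolynomial (Fin (M + 2)) k)}
    (h : Module.finrank k (Ig I r) = 1) (d : ℕ) (hd : d < r) : Ig I d = ⊥ := by
  rw [eq_bot_iff]
  intro f hf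
  by_contra hf0
  have hf0 : f ≠ 0 := hf0
  obtain ⟨s, rfl⟩ : ∃ s, r = d + s + 1 := ⟨r - d - 1, by omega⟩
  have hmem : ∀ i : Fin (M + 2), X i * (X 0 ^ s * f) ∈ Ig I (d + s + 1) := by
    intro i
    refine ⟨?_, I.mul_mem_left _ (I.mul_mem_left _ hf.2)⟩
    have := (isHomogeneous_X k i).mul (((isHomogeneous_X k (0 : Fin (M + 2))).pow s).mul hf.1)
    rwa [show 1 + (1 * s + d) = d + s + 1 by ring] at this
  have hg0 : (X 0 ^ s * f : MvPolynomial (Fin (M + 2)) k) ≠ 0 :=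
    mul_ne_zero (pow_ne_zero _ (X_ne_zero _)) hf0
  obtain ⟨c, hc⟩ := (finrank_eq_one_iff_of_nonzero' (⟨_, hmem 0⟩ : Ig I (d + s + 1)) (by
    intro h0
    have := congrArg Subtype.val h0
    exact mul_ne_zero (X_ne_zero _) hg0 this)).1 h ⟨_, hmem 1⟩
  have h1 : c • (X 0 * (X 0 ^ s * f)) = X 1 * (X 0 ^ s * f) := congrArg Subtype.val hc
  rw [← smul_mul_assoc] at h1
  have h2 := mul_right_cancel₀ hg0 h1
  have h3 := congrArg (coeff (Finsupp.single 1 1)) h2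
  have hne01 : (Finsupp.single (0 : Fin (M + 2)) 1 : Fin (M + 2) →₀ ℕ) ≠ Finsupp.single 1 1 := by
    intro h
    have := DFunLike.congr_fun h 0
    simp at this
  rw [coeff_smul, coeff_X, coeff_X] at h3
  simp [hne01] at h3

lemma nat_arg2 {g h : ℕ → ℕ} {n r : ℕ}
    (hlt : ∀ d < r, SS^[n + 1] g d = SS^[n + 1] h d) (heq : SS^[n + 1] g r + 1 = SS^[n + 1] h r) :
    (∀ d < r, g d = h d) ∧ g r + 1 = h r := by
  have h1 : ∀ d < r, g d = h d := by
    intro d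
    induction d using Nat.strong_induction_on with
    | _ d ih =>
      intro hd
      have h2 := hlt d hd
      rw [SS_formula, SS_formula, Finset.sum_range_succ, Finset.sum_range_succ,
        Finset.sum_congr rfl fun j hj => by
          rw [ih j (Finset.mem_range.1 hj) (lt_trans (Finset.mem_range.1 hj) hd)]] at h2
      simpa using h2
  refine ⟨h1, ?_⟩
  rw [SS_formula, SS_formula, Finset.sum_range_succ, Finset.sum_range_succ,
        Finset.sum_congr rfl fun j hj => by
          rw [h1 j (Finset.mem_range.1 hj)]] at heq
  simp at heq
  omega

theorem backward [Infinite k] {n e r : ℕ} (he : 0 < e) {I : Ideal (MvPolynomial (Fin (n + e + 1)) k)}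
    (hI : Paper.IdealHomog k I) (hne : I ≠ ⊤) (hNN : Paper.IsNoetherNormalization k e I)
    (hr : Paper.reductionNumber k e I = r)
    (hCM : Paper.IsCMQuot k I (n + 1))
    (hdim : Module.finrank k ↥(Paper.idealDeg k I (r : ℤ)) = 1) :
    Paper.HasDeg k I n ((e + r).choose r - 1) ∧ Paper.muS k e I = (e + r).choose r - 1 := by
  obtain ⟨hr0, hK⟩ := red_spec hI hNN hr
  have hbig : 2 ≤ (e + r).choose r := by
    have h3 : (e + r).choose r ≥ (1 + r).choose r := Nat.choose_le_choose _ (by omega)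
    rw [add_comm 1 r, Nat.choose_succ_self_right] at h3
    omega
  rw [finrank_idealDeg] at hdim
  have hH := CM_hilb hI hne hNN hCM
  have hb := hilb_bot (k := k) n e
  have hlow : ∀ d < r, Ig I d = ⊥ := by
    intro d hd
    obtain ⟨e', rfl⟩ : ∃ e', e = e' + 1 := ⟨e - 1, by omega⟩
    exact low_zero (M := n + e') hdim d hd
  obtain ⟨h1, h2⟩ := nat_arg2 (n := n) (r := r) (g := Paper.hilbFn k (I ⊔ ysI k (n + e + 1) e))
    (h := Paper.hilbFn k (ysI k (n + e + 1) e)) (by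
      intro d hd
      rw [← hH, ← hb, hilb_botr, ← hilb_add I d, hlow d hd, finrank_bot, add_zero]) (by
      rw [← hH, ← hb, hilb_botr, ← hilb_add I r, hdim])
  have hsum : ∑ d ∈ Finset.range (r + 1), Paper.hilbFn k (I ⊔ ysI k (n + e + 1) e) d + 1 =
      (e + r).choose r := by
    rw [← sum_hilb_ysI (k := k) (N := n + e + 1) e r he (by omega), Finset.sum_range_succ,
      Finset.sum_range_succ, ← h2, Finset.sum_congr rfl fun d hd => h1 d (Finset.mem_range.1 hd)]
    ring
  have hmu : Paper.muS k e I = (e + r).choose r - 1 := by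
    rw [mu_eq hI hK]; omega
  refine ⟨?_, hmu⟩
  have hzero : ∀ d ≥ r + 1, Paper.hilbFn k (I ⊔ ysI k (n + e + 1) e) d = 0 := by
    intro d hd
    have h3 := hilb_add (I ⊔ ysI k (n + e + 1) e) d
    have h4 : Ig (I ⊔ ysI k (n + e + 1) e) d = homogeneousSubmodule _ k d :=
      inf_eq_left.2 fun f hf => hK d hd f hf
    rw [h4] at h3
    omega
  set g := Paper.hilbFn k (I ⊔ ysI k (n + e + 1) e) with hg
  set P : Polynomial ℚ := ∑ j ∈ Finset.range (r + 1),
    Polynomial.C (g j : ℚ) * Polynomial.preHilbertPoly ℚ n j with hP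
  have hfac : (n.factorial : ℚ) ≠ 0 := by exact_mod_cast n.factorial_ne_zero
  have hle : P.natDegree ≤ n := by
    refine Polynomial.natDegree_sum_le_of_forall_le _ _ fun j _ => ?_
    refine (Polynomial.natDegree_C_mul_le _ _).trans ?_
    rw [Polynomial.natDegree_preHilbertPoly]
  have hcoef : P.coeff n * (n.factorial : ℚ) = (((e + r).choose r - 1 : ℕ) : ℚ) := by
    rw [hP, Polynomial.finsetSum_coeff]
    simp only [Polynomial.coeff_C_mul, Polynomial.coeff_preHilbertPoly_self]
    rw [← Finset.sum_mul, mul_assoc, inv_mul_cancel₀ hfac, mul_one, ← hsum]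
    simp
  have hnz : P.coeff n ≠ 0 := by
    intro h0
    rw [h0, zero_mul] at hcoef
    have : (e + r).choose r - 1 = 0 := by exact_mod_cast hcoef.symm
    omega
  have hnd : P.natDegree = n := le_antisymm hle (Polynomial.le_natDegree_of_ne_zero hnz)
  refine ⟨P, hnd, ?_, ?_⟩
  · rw [Polynomial.leadingCoeff, hnd, hcoef]
  · filter_upwards [Filter.eventually_ge_atTop r] with d hd
    rw [hH, SS_formula, hP, Polynomial.eval_finsetSum]
    have h5 : ∑ j ∈ Finset.range (d + 1), g j * (n + (d - j)).choose n =
        ∑ j ∈ Finset.range (r + 1), g j * (n + (d - j)).choose n := by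
      symm
      refine Finset.sum_subset (Finset.range_mono (by omega)) fun j _ hj => ?_
      rw [Finset.mem_range] at hj
      rw [hzero j (by omega), zero_mul]
    rw [h5]
    push_cast
    refine Finset.sum_congr rfl fun j hj => ?_
    rw [Finset.mem_range] at hj
    rw [Polynomial.eval_mul, Polynomial.eval_C,
      Polynomial.preHilbertPoly_eq_choose_sub_add ℚ n (show j ≤ d by omega), add_comm n (d - j)]

end bwd
end St

end StHelpers

/-- Theorem 4.1: for a non-degenerate closed subscheme `X ⊆ ℙ^{n+e}` with reduction
number `r = r_S(R)` w.r.t. the Noether normalization `S = k[x_e,…,x_{n+e}] → R`: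
`deg(X) = μ_S(R) = C(e+r, r) - 1` iff `X` is arithmetically Cohen-Macaulay,
`dim_k (I_X)_r = 1`, and the truncated ideal `(I_X)_{≥ r+1}` has a linear minimal free
resolution. -/
theorem stmt18 (k : Type) [Field k] [IsAlgClosed k] (n e r : ℕ) (he : 0 < e)
    (I : Ideal (MvPolynomial (Fin (n + e + 1)) k))
    (hIhom : Paper.IdealHomog k I) (hsat : Paper.IsSaturatedIdeal k I)
    (hnd : Paper.Nondegenerate k I) (hproper : I ≠ ⊤)
    (hNN : Paper.IsNoetherNormalization k e I)
    (hr : Paper.reductionNumber k e I = r) :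
    (Paper.HasDeg k I n ((e + r).choose r - 1) ∧
        Paper.muS k e I = (e + r).choose r - 1) ↔
      (Paper.IsCMQuot k I (n + 1) ∧
        Module.finrank k ↥(Paper.idealDeg k I (r : ℤ)) = 1 ∧
        ∃ d0 : ℤ, ∀ res : Paper.MinGradedFreeRes k (Fin (n + e + 1))
            ↥(Paper.truncIdeal k I r) (Paper.idealDeg k (Paper.truncIdeal k I r)),
          ∀ (i : ℕ) (j : ℤ), res.β i j ≠ 0 → j = d0) := by
  have : Infinite k := IsAlgClosed.instInfinite
  exact ⟨fun ⟨h1, h2⟩ => St.forward he hIhom hNN hr h1 h2,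
    fun ⟨h1, h2, _⟩ => St.backward he hIhom hproper hNN hr h1 h2⟩
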